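/- arXiv:1201.4078 — 3 statements merged into one kernel-verified Lean document; each statement's English description precedes it below -/
import Mathlib

section
/- Let B₀ and B₁ be d×d real Hurwitz matrices with B₀ᵀ+B₀ and B₁ᵀ+B₁ negative semidefinite, and let K = ker(B₀ᵀ+B₀) ∩ ker(B₁ᵀ+B₁). Let τ > 0, let λ : [0,τ] → [0,1] be Lebesgue-measurable, and let ψ : [0,τ] → ℝ^d be continuous with ψ(t) = ψ(0) + ∫₀ᵗ B_{λ(s)} ψ(s) ds for all t ∈ [0,τ]. If there is r > 0 with ‖ψ(t)‖ = r for all t ∈ [0,τ], then ψ(t) ∈ K for all t ∈ [0,τ]. -/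
open Matrix MeasureTheory Filter Set
open scoped RealInnerProductSpace

noncomputable section

variable {d : ℕ}

/-- The convex combination `B_λ = (1-λ)•B₀ + λ•B₁`. -/
def Bmat (B₀ B₁ : Matrix (Fin d) (Fin d) ℝ) (l : ℝ) : Matrix (Fin d) (Fin d) ℝ :=
  (1 - l) • B₀ + l • B₁

/-- A real square matrix is Hurwitz if every complex eigenvalue has negative real part. -/
def IsHurwitz (B : Matrix (Fin d) (Fin d) ℝ) : Prop :=
  ∀ μ : ℂ, μ ∈ spectrum ℂ (B.map (algebraMap ℝ ℂ)) → μ.re < 0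

/-- `K = ker(B₀ᵀ+B₀) ∩ ker(B₁ᵀ+B₁)` as a subspace of `ℝ^d`. -/
def Ksub (B₀ B₁ : Matrix (Fin d) (Fin d) ℝ) : Submodule ℝ (EuclideanSpace ℝ (Fin d)) :=
  LinearMap.ker (Matrix.toEuclideanLin (B₀ᵀ + B₀)) ⊓
    LinearMap.ker (Matrix.toEuclideanLin (B₁ᵀ + B₁))

lemma aux_trajectory {E : Type*} [NormedAddCommGroup E] [InnerProductSpace ℝ E]
    [FiniteDimensional ℝ E] (L₀ L₁ S : E →L[ℝ] E)
    (h₀ : ∀ x, ⟪x, L₀ x⟫ ≤ 0) (h₁ : ∀ x, ⟪x, L₁ x⟫ ≤ 0)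
    (hS : ∀ x, ⟪x, L₀ x⟫ = 0 → S x = 0)
    (hH : ∀ x, (∀ k : ℕ, S ((L₀ ^ k) x) = 0) → x = 0)
    (τ : ℝ) (hτ : 0 < τ) (lam : ℝ → ℝ) (hlam : Measurable lam)
    (hlam01 : ∀ t ∈ Icc 0 τ, lam t ∈ Icc (0:ℝ) 1)
    (ψ : ℝ → E) (hψc : ContinuousOn ψ (Icc 0 τ))
    (hψ : ∀ t ∈ Icc 0 τ,
      ψ t = ψ 0 + ∫ s in (0:ℝ)..t, ((1 - lam s) • L₀ (ψ s) + lam s • L₁ (ψ s)))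
    (r : ℝ) (hr : 0 < r) (hnorm : ∀ t ∈ Icc 0 τ, ‖ψ t‖ = r) :
    ∀ t ∈ Icc 0 τ, ⟪ψ t, L₁ (ψ t)⟫ = 0 := by
  set g : ℝ → E := fun s => (1 - lam s) • L₀ (ψ s) + lam s • L₁ (ψ s) with hg
  have hgi : IntervalIntegrable g volume 0 τ := by
    rw [intervalIntegrable_iff_integrableOn_Icc_of_le hτ.le]
    have i0 : IntegrableOn (fun s => L₀ (ψ s)) (Icc 0 τ) :=
      (L₀.continuous.comp_continuousOn hψc).integrableOn_Icc
    have i1 : IntegrableOn (fun s => L₁ (ψ s)) (Icc 0 τ) :=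
      (L₁.continuous.comp_continuousOn hψc).integrableOn_Icc
    refine Integrable.add (Integrable.bdd_smul (φ := fun s => 1 - lam s) i0 1 ?_ ?_)
      (Integrable.bdd_smul (φ := lam) i1 1 ?_ ?_)
    · exact (measurable_const.sub hlam).aestronglyMeasurable
    · refine (ae_restrict_iff' measurableSet_Icc).2 (ae_of_all _ fun t ht => ?_)
      have := hlam01 t ht
      rw [Real.norm_eq_abs, abs_le]; constructor <;> linarith [this.1, this.2]
    · exact hlam.aestronglyMeasurable
    · refine (ae_restrict_iff' measurableSet_Icc).2 (ae_of_all _ fun t ht => ?_)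
      have := hlam01 t ht
      rw [Real.norm_eq_abs, abs_le]; constructor <;> linarith [this.1, this.2]
  -- zero derivative of the norm
  have hkey : ∀ t ∈ Ioo 0 τ, ∀ v, HasDerivAt ψ v t → ⟪ψ t, v⟫ = 0 := by
    intro t ht v hv
    have h1 := hv.inner ℝ hv
    have h2 : HasDerivAt (fun s => ⟪ψ s, ψ s⟫) 0 t := by
      refine (hasDerivAt_const t (r ^ 2)).congr_of_eventuallyEq ?_
      filter_upwards [Ioo_mem_nhds ht.1 ht.2] with s hs
      rw [real_inner_self_eq_norm_sq, hnorm s ⟨hs.1.le, hs.2.le⟩]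
    have h3 := h1.unique h2
    rw [real_inner_comm (ψ t) v] at h3
    linarith
  have hae : ∀ᵐ t, t ∈ Ioo 0 τ → ⟪ψ t, L₁ (ψ t)⟫ < 0 → g t = L₀ (ψ t) := by
    filter_upwards [hgi.ae_hasDerivAt_integral] with t ht htI hneg
    rw [uIcc_of_le hτ.le] at ht
    have hd := ht ⟨htI.1.le, htI.2.le⟩ 0 ⟨le_rfl, hτ.le⟩
    have hd' : HasDerivAt ψ (g t) t := by
      refine (hd.const_add (ψ 0)).congr_of_eventuallyEq ?_
      filter_upwards [Ioo_mem_nhds htI.1 htI.2] with s hs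
      exact hψ s ⟨hs.1.le, hs.2.le⟩
    have hz := hkey t htI _ hd'
    have hl := hlam01 t ⟨htI.1.le, htI.2.le⟩
    have hl0 : lam t = 0 := by
      simp only [hg, inner_add_right, inner_smul_right] at hz
      have a := h₀ (ψ t)
      by_contra hne
      have : 0 < lam t := lt_of_le_of_ne hl.1 (Ne.symm hne)
      nlinarith [mul_nonneg (sub_nonneg.2 hl.2) (neg_nonneg.2 a), mul_pos this (neg_pos.2 hneg)]
    simp [hg, hl0]
  have hqc : ContinuousOn (fun t => ⟪ψ t, L₁ (ψ t)⟫) (Icc 0 τ) :=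
    hψc.inner (L₁.continuous.comp_continuousOn hψc)
  have hIoo : ∀ t ∈ Ioo 0 τ, ⟪ψ t, L₁ (ψ t)⟫ = 0 := by
    intro t₀ ht₀
    by_contra hne
    have hneg : ⟪ψ t₀, L₁ (ψ t₀)⟫ < 0 := lt_of_le_of_ne (h₁ _) hne
    have hev : ∀ᶠ t in nhds t₀, t ∈ Ioo 0 τ ∧ ⟪ψ t, L₁ (ψ t)⟫ < 0 := by
      have hc : ContinuousAt (fun t => ⟪ψ t, L₁ (ψ t)⟫) t₀ :=
        hqc.continuousAt (Icc_mem_nhds ht₀.1 ht₀.2)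
      filter_upwards [Ioo_mem_nhds ht₀.1 ht₀.2, hc.eventually (gt_mem_nhds hneg)] with t a b
      exact ⟨a, b⟩
    obtain ⟨ε, hε, hball⟩ := Metric.eventually_nhds_iff_ball.1 hev
    rw [Real.ball_eq_Ioo] at hball
    set J := Ioo (t₀ - ε) (t₀ + ε) with hJ
    have ht₀J : t₀ ∈ J := ⟨by linarith, by linarith⟩
    have hψJ : ContinuousOn ψ J := hψc.mono fun t ht =>
      ⟨(hball t ht).1.1.le, (hball t ht).1.2.le⟩
    have hLJ : ContinuousOn (fun s => L₀ (ψ s)) J := L₀.continuous.comp_continuousOn hψJ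
    have hsub : ∀ t ∈ J, uIcc t₀ t ⊆ J := fun t ht =>
      (ordConnected_Ioo).uIcc_subset ht₀J ht
    have hrep : ∀ t ∈ J, ψ t = ψ t₀ + ∫ s in t₀..t, L₀ (ψ s) := by
      intro t ht
      have hti := (hball t ht).1
      have e1 := hψ t ⟨hti.1.le, hti.2.le⟩
      have e2 := hψ t₀ ⟨ht₀.1.le, ht₀.2.le⟩
      have e3 : ∫ s in t₀..t, g s = ∫ s in t₀..t, L₀ (ψ s) := by
        apply intervalIntegral.integral_congr_ae
        filter_upwards [hae] with s hs hsI
        have := hball s (hsub t ht (uIoc_subset_uIcc hsI))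
        exact hs this.1 this.2
      have i1 : IntervalIntegrable g volume 0 t := hgi.mono_set (by
        rw [uIcc_of_le hτ.le, uIcc_of_le hti.1.le]; exact Icc_subset_Icc_right hti.2.le)
      have i2 : IntervalIntegrable g volume 0 t₀ := hgi.mono_set (by
        rw [uIcc_of_le hτ.le, uIcc_of_le ht₀.1.le]; exact Icc_subset_Icc_right ht₀.2.le)
      have e4 := intervalIntegral.integral_interval_sub_left i1 i2
      rw [← e3, ← e4, e1]
      rw [e2]
      abel
    have hder : ∀ t ∈ J, HasDerivAt ψ (L₀ (ψ t)) t := by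
      intro t ht
      have hJn : J ∈ nhds t := isOpen_Ioo.mem_nhds ht
      have hd := intervalIntegral.integral_hasDerivAt_right
        (f := fun s => L₀ (ψ s)) (a := t₀) (b := t)
        ((hLJ.mono (hsub t ht)).intervalIntegrable)
        (hLJ.stronglyMeasurableAtFilter isOpen_Ioo t ht) (hLJ.continuousAt hJn)
      refine (hd.const_add (ψ t₀)).congr_of_eventuallyEq ?_
      filter_upwards [hJn] with s hs using hrep s hs
    have hk : ∀ k : ℕ, ∀ t ∈ J, S ((L₀ ^ k) (ψ t)) = 0 := by
      intro k
      induction k with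
      | zero =>
        intro t ht
        simpa using hS _ (hkey t (hball t ht).1 _ (hder t ht))
      | succ k ih =>
        intro t ht
        have d1 : HasDerivAt (fun s => (S ∘L (L₀ ^ k)) (ψ s)) ((S ∘L (L₀ ^ k)) (L₀ (ψ t))) t :=
          (S ∘L (L₀ ^ k)).hasFDerivAt.comp_hasDerivAt t (hder t ht)
        have d2 : HasDerivAt (fun s => (S ∘L (L₀ ^ k)) (ψ s)) 0 t := by
          refine (hasDerivAt_const t (0 : E)).congr_of_eventuallyEq ?_
          filter_upwards [isOpen_Ioo.mem_nhds ht] with s hs using ih s hs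
        have := d1.unique d2
        rw [pow_succ]
        exact this
    have hz := hH (ψ t₀) fun k => hk k t₀ ht₀J
    have := hnorm t₀ ⟨ht₀.1.le, ht₀.2.le⟩
    rw [hz, norm_zero] at this
    linarith
  have hcl : EqOn (fun t => ⟪ψ t, L₁ (ψ t)⟫) (fun _ => (0:ℝ)) (Icc 0 τ) := by
    refine EqOn.of_subset_closure (s := Ioo 0 τ) (t := Icc 0 τ) hIoo hqc continuousOn_const
      Ioo_subset_Icc_self ?_
    rw [closure_Ioo hτ.ne]
  exact hcl

lemma aux_hurwitz (B : Matrix (Fin d) (Fin d) ℝ) (hH : IsHurwitz B) (x : Fin d → ℝ)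
    (hx : ∀ k : ℕ, (Bᵀ + B) *ᵥ ((B ^ k) *ᵥ x) = 0) : x = 0 := by
  by_contra hne
  set C := B.map (algebraMap ℝ ℂ) with hC
  let W : Submodule ℂ (Fin d → ℂ) :=
    ⨅ k : ℕ, LinearMap.ker (Matrix.toLin' ((Cᵀ + C) * C ^ k))
  have hW : ∀ z, z ∈ W ↔ ∀ k : ℕ, ((Cᵀ + C) * C ^ k) *ᵥ z = 0 := by
    intro z; simp only [W, Submodule.mem_iInf, LinearMap.mem_ker, Matrix.toLin'_apply]
  have hinv : ∀ z ∈ W, Matrix.toLin' C z ∈ W := by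
    intro z hz
    rw [hW] at hz ⊢
    intro k
    rw [Matrix.toLin'_apply, Matrix.mulVec_mulVec, mul_assoc, ← pow_succ]
    exact hz (k + 1)
  have hxW : (fun i => (x i : ℂ)) ∈ W := by
    rw [hW]
    intro k
    have e : (Cᵀ + C) * C ^ k = ((Bᵀ + B) * B ^ k).map (algebraMap ℝ ℂ) := by
      have hp : C ^ k = (B ^ k).map (algebraMap ℝ ℂ) :=
        (map_pow (algebraMap ℝ ℂ).mapMatrix B k).symm
      rw [Matrix.map_mul, hp, Matrix.map_add _ (map_add _), hC, Matrix.transpose_map]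
    rw [e]
    funext i
    have h := RingHom.map_mulVec (algebraMap ℝ ℂ) ((Bᵀ + B) * B ^ k) x i
    rw [← Matrix.mulVec_mulVec, hx k] at h
    exact h.symm.trans (by simp)
  have hnt : Nontrivial W := by
    refine ⟨⟨⟨_, hxW⟩, 0, fun h => hne ?_⟩⟩
    funext i
    have := congrFun (congrArg Subtype.val h) i
    simpa using this
  obtain ⟨μ, hμ⟩ := Module.End.exists_eigenvalue ((Matrix.toLin' C).restrict hinv)
  obtain ⟨⟨z, hzW⟩, hz⟩ := hμ.exists_hasEigenvector
  have hz0 : z ≠ 0 := fun h => hz.2 (Subtype.ext h)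
  have hCz : C *ᵥ z = μ • z := by
    have := congrArg Subtype.val hz.apply_eq_smul
    simpa using this
  have hspec : μ ∈ spectrum ℂ C := by
    rw [← Matrix.spectrum_toLin']
    refine Module.End.HasEigenvalue.mem_spectrum ?_
    refine Module.End.hasEigenvalue_of_hasEigenvector (x := z) ⟨?_, hz0⟩
    rw [Module.End.mem_eigenspace_iff]
    simpa using hCz
  have hre := hH μ hspec
  have hS : (Cᵀ + C) *ᵥ z = 0 := by simpa using (hW z).1 hzW 0
  have hCt : Cᵀ = Cᴴ := by
    ext i j; simp [hC, Matrix.conjTranspose_apply]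
  have h1 : star z ⬝ᵥ ((Cᵀ + C) *ᵥ z) = (star μ + μ) * (star z ⬝ᵥ z) := by
    rw [Matrix.add_mulVec, dotProduct_add, hCt, Matrix.dotProduct_mulVec,
      ← Matrix.star_mulVec, hCz]
    simp [add_mul]
  rw [hS, dotProduct_zero] at h1
  have h2 : star z ⬝ᵥ z ≠ 0 := by
    open scoped ComplexOrder in rwa [Ne, dotProduct_star_self_eq_zero]
  have h3 := (mul_eq_zero.1 h1.symm).resolve_right h2
  have h4 := congrArg Complex.re h3
  simp at h4
  linarith

lemma aux_inner (B : Matrix (Fin d) (Fin d) ℝ) (x : EuclideanSpace ℝ (Fin d)) :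
    2 * ⟪x, Matrix.toEuclideanLin B x⟫ = x.ofLp ⬝ᵥ ((Bᵀ + B) *ᵥ x.ofLp) := by
  rw [Matrix.add_mulVec, dotProduct_add, Matrix.dotProduct_mulVec, Matrix.vecMul_transpose,
    EuclideanSpace.inner_eq_star_dotProduct]
  simp [dotProduct_comm, two_mul]

lemma aux_ker (B : Matrix (Fin d) (Fin d) ℝ)
    (h : ∀ x : Fin d → ℝ, x ⬝ᵥ ((Bᵀ + B) *ᵥ x) ≤ 0) (x : EuclideanSpace ℝ (Fin d))
    (hx : ⟪x, Matrix.toEuclideanLin B x⟫ = 0) : Matrix.toEuclideanLin (Bᵀ + B) x = 0 := by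
  have hp : (-(Bᵀ + B)).PosSemidef := by
    refine .of_dotProduct_mulVec_nonneg ?_ fun y => ?_
    · rw [Matrix.IsHermitian, Matrix.conjTranspose_eq_transpose_of_trivial]
      simp [add_comm]
    · have := h y
      simp only [star_trivial, Matrix.neg_mulVec, dotProduct_neg]
      linarith
  have h0 := aux_inner B x
  have := (hp.dotProduct_mulVec_zero_iff x.ofLp).1 (by
    rw [star_trivial, Matrix.neg_mulVec, dotProduct_neg, ← h0, hx]; simp)
  rw [Matrix.neg_mulVec, neg_eq_zero] at this
  exact congrArg (WithLp.toLp 2) this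

lemma aux_half (B₀ B₁ : Matrix (Fin d) (Fin d) ℝ)
    (hH₀ : IsHurwitz B₀)
    (h₀ : ∀ x : Fin d → ℝ, x ⬝ᵥ ((B₀ᵀ + B₀) *ᵥ x) ≤ 0)
    (h₁ : ∀ x : Fin d → ℝ, x ⬝ᵥ ((B₁ᵀ + B₁) *ᵥ x) ≤ 0)
    (τ : ℝ) (hτ : 0 < τ) (lam : ℝ → ℝ) (hlam : Measurable lam)
    (hlam01 : ∀ t ∈ Icc 0 τ, lam t ∈ Icc (0:ℝ) 1)
    (ψ : ℝ → EuclideanSpace ℝ (Fin d)) (hψc : ContinuousOn ψ (Icc 0 τ))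
    (hψ : ∀ t ∈ Icc 0 τ,
      ψ t = ψ 0 + ∫ s in (0:ℝ)..t, Matrix.toEuclideanLin (Bmat B₀ B₁ (lam s)) (ψ s))
    (r : ℝ) (hr : 0 < r) (hnorm : ∀ t ∈ Icc 0 τ, ‖ψ t‖ = r) :
    ∀ t ∈ Icc 0 τ, Matrix.toEuclideanLin (B₁ᵀ + B₁) (ψ t) = 0 := by
  intro t ht
  apply aux_ker B₁ h₁
  refine aux_trajectory (LinearMap.toContinuousLinearMap (Matrix.toEuclideanLin B₀))
    (LinearMap.toContinuousLinearMap (Matrix.toEuclideanLin B₁))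
    (LinearMap.toContinuousLinearMap (Matrix.toEuclideanLin (B₀ᵀ + B₀)))
    ?_ ?_ (fun x hx => aux_ker B₀ h₀ x hx) ?_ τ hτ lam hlam hlam01 ψ hψc ?_ r hr hnorm t ht
  · intro x
    have := aux_inner B₀ x
    have := h₀ x.ofLp
    simp only [LinearMap.coe_toContinuousLinearMap']
    linarith
  · intro x
    have := aux_inner B₁ x
    have := h₁ x.ofLp
    simp only [LinearMap.coe_toContinuousLinearMap']
    linarith
  · intro x hx
    have hpow : ∀ k : ℕ, (((LinearMap.toContinuousLinearMap (Matrix.toEuclideanLin B₀)) ^ k) x).ofLp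
        = (B₀ ^ k) *ᵥ x.ofLp := by
      intro k
      induction k with
      | zero => simp
      | succ k ih =>
        rw [pow_succ', pow_succ', ← Matrix.mulVec_mulVec, ← ih]
        rfl
    have := aux_hurwitz B₀ hH₀ x.ofLp fun k => by
      rw [← hpow k]
      exact congrArg WithLp.ofLp (hx k)
    ext i
    simpa using congrFun this i
  · intro t ht
    rw [hψ t ht]
    congr 2
    funext s
    simp [Bmat, map_add, map_smul]

/-- Lemma `Inter`. Let `B₀, B₁` be Hurwitz with `B₀ᵀ+B₀`, `B₁ᵀ+B₁`
negative semidefinite. If `ψ` solves `ψ̇ = B_{λ(t)}ψ` on `[0,τ]` for a measurable input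
`λ : [0,τ] → [0,1]` and `‖ψ(t)‖ = r > 0` is constant on `[0,τ]`, then `ψ(t) ∈ K` for
all `t ∈ [0,τ]`. -/
theorem constant_norm_trajectory_mem_K (B₀ B₁ : Matrix (Fin d) (Fin d) ℝ)
    (hH₀ : IsHurwitz B₀) (hH₁ : IsHurwitz B₁)
    (h₀ : ∀ x : Fin d → ℝ, x ⬝ᵥ ((B₀ᵀ + B₀) *ᵥ x) ≤ 0)
    (h₁ : ∀ x : Fin d → ℝ, x ⬝ᵥ ((B₁ᵀ + B₁) *ᵥ x) ≤ 0)
    (τ : ℝ) (hτ : 0 < τ) (lam : ℝ → ℝ) (hlam : Measurable lam)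
    (hlam01 : ∀ t ∈ Icc 0 τ, lam t ∈ Icc (0:ℝ) 1)
    (ψ : ℝ → EuclideanSpace ℝ (Fin d)) (hψc : ContinuousOn ψ (Icc 0 τ))
    (hψ : ∀ t ∈ Icc 0 τ,
      ψ t = ψ 0 + ∫ s in (0:ℝ)..t, Matrix.toEuclideanLin (Bmat B₀ B₁ (lam s)) (ψ s))
    (r : ℝ) (hr : 0 < r) (hnorm : ∀ t ∈ Icc 0 τ, ‖ψ t‖ = r) :
    ∀ t ∈ Icc 0 τ, ψ t ∈ Ksub B₀ B₁ := by
  intro t ht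
  have a := aux_half B₀ B₁ hH₀ h₀ h₁ τ hτ lam hlam hlam01 ψ hψc hψ r hr hnorm t ht
  have b := aux_half B₁ B₀ hH₁ h₁ h₀ τ hτ (fun s => 1 - lam s) (measurable_const.sub hlam)
    (fun s hs => ⟨by linarith [(hlam01 s hs).2], by linarith [(hlam01 s hs).1]⟩) ψ hψc
    (fun s hs => by
      have e : ∀ u, Bmat B₁ B₀ (1 - lam u) = Bmat B₀ B₁ (lam u) := by
        intro u; simp [Bmat, add_comm]
      simp only [e]
      exact hψ s hs) r hr hnorm t ht
  exact ⟨b, a⟩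

end
end

section
/- Let C₀ and C₁ be k'×k real matrices and let D₀ and D₁ be k'×k' real matrices with D₀ᵀ+D₀ and D₁ᵀ+D₁ negative definite. Consider the (k+k')×(k+k') block matrices B₀ = [[0, −C₀ᵀ],[C₀, D₀]] and B₁ = [[0, −C₁ᵀ],[C₁, D₁]]. Then the switched system defined by {B₀, B₁} is GUAS if and only if for every λ ∈ [0,1] the matrix C_λ := (1−λ)C₀ + λC₁ has trivial kernel (is one-to-one as a map ℝ^k → ℝ^{k'}). -/
open Matrix MeasureTheory

noncomputable section

/-- The switched system defined by `{B₀, B₁}` is GUAS: for every measurable switching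
law `u : [0,∞) → {0,1}` and every initial condition, the solution of `ẋ = B_{u(t)}x`
tends to `0` at `+∞`. -/
def IsGUAS {n : Type*} [Fintype n] [DecidableEq n] (B₀ B₁ : Matrix n n ℝ) : Prop :=
  ∀ u : ℝ → Fin 2, Measurable u →
    ∀ X : EuclideanSpace ℝ n, ∀ Φ : ℝ → EuclideanSpace ℝ n, Continuous Φ →
      (∀ t : ℝ, 0 ≤ t →
        Φ t = X + ∫ s in (0:ℝ)..t, Matrix.toEuclideanLin (![B₀, B₁] (u s)) (Φ s)) →
      Filter.Tendsto Φ Filter.atTop (nhds 0)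

section Abstract
open Set Filter Topology

variable {E : Type*} [NormedAddCommGroup E] [InnerProductSpace ℝ E] [FiniteDimensional ℝ E]

theorem sw_meas (B : Fin 2 → E →L[ℝ] E) (u : ℝ → Fin 2) (hu : Measurable u)
    (Φ : ℝ → E) (hΦ : Continuous Φ) (a b : ℝ) :
    IntervalIntegrable (fun s => B (u s) (Φ s)) volume a b := by
  have h1 : (fun s => B (u s) (Φ s)) = fun s => if u s = 0 then B 0 (Φ s) else B 1 (Φ s) := by
    funext s
    split_ifs with h
    · rw [h]
    · have : u s = 1 := by omega
      rw [this]
  have hm : StronglyMeasurable (fun s => B (u s) (Φ s)) := by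
    rw [h1]
    refine StronglyMeasurable.ite (hu (measurableSet_singleton 0)) ?_ ?_
    · exact ((B 0).continuous.comp hΦ).stronglyMeasurable
    · exact ((B 1).continuous.comp hΦ).stronglyMeasurable
  have hc : IntervalIntegrable (fun s => (‖B 0‖ + ‖B 1‖) * ‖Φ s‖) volume a b :=
    (Continuous.mul continuous_const hΦ.norm).intervalIntegrable a b
  refine hc.mono_fun hm.aestronglyMeasurable (Eventually.of_forall fun s => ?_)
  have h2 : ‖B (u s)‖ ≤ ‖B 0‖ + ‖B 1‖ := by
    have h0 := norm_nonneg (B 0)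
    have h1 := norm_nonneg (B 1)
    generalize u s = i
    fin_cases i <;> simp
  calc ‖B (u s) (Φ s)‖ ≤ ‖B (u s)‖ * ‖Φ s‖ := (B (u s)).le_opNorm _
    _ ≤ (‖B 0‖ + ‖B 1‖) * ‖Φ s‖ := by gcongr
    _ ≤ _ := le_abs_self _

theorem sw_diff (B : Fin 2 → E →L[ℝ] E) (u : ℝ → Fin 2) (hu : Measurable u)
    (Φ : ℝ → E) (hΦ : Continuous Φ) (X : E)
    (hs : ∀ t : ℝ, 0 ≤ t → Φ t = X + ∫ s in (0:ℝ)..t, B (u s) (Φ s))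
    {a b : ℝ} (ha : 0 ≤ a) (hb : 0 ≤ b) : Φ b - Φ a = ∫ s in a..b, B (u s) (Φ s) := by
  rw [hs b hb, hs a ha, add_sub_add_left_eq_sub,
    intervalIntegral.integral_interval_sub_left (sw_meas B u hu Φ hΦ _ _)
      (sw_meas B u hu Φ hΦ _ _)]

theorem sw_lip (B : Fin 2 → E →L[ℝ] E) (u : ℝ → Fin 2) (hu : Measurable u)
    (Φ : ℝ → E) (hΦ : Continuous Φ) (X : E)
    (hs : ∀ t : ℝ, 0 ≤ t → Φ t = X + ∫ s in (0:ℝ)..t, B (u s) (Φ s))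
    {a b M : ℝ} (ha : 0 ≤ a)
    (hB : ∀ s ∈ Icc a b, ∀ i, ‖B i (Φ s)‖ ≤ M) :
    ∀ x ∈ Icc a b, ∀ y ∈ Icc a b, ‖Φ y - Φ x‖ ≤ M * |y - x| := by
  intro x hx y hy
  rw [sw_diff B u hu Φ hΦ X hs (ha.trans hx.1) (ha.trans hy.1)]
  refine intervalIntegral.norm_integral_le_of_norm_le_const fun s hs => ?_
  have : s ∈ Icc a b := by
    have h := uIoc_subset_uIcc hs
    exact (ordConnected_Icc.uIcc_subset hx hy) h
  exact hB s this _

theorem sw_energy (B : Fin 2 → E →L[ℝ] E) (u : ℝ → Fin 2) (hu : Measurable u)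
    (Φ : ℝ → E) (hΦ : Continuous Φ) (X : E)
    (hs : ∀ t : ℝ, 0 ≤ t → Φ t = X + ∫ s in (0:ℝ)..t, B (u s) (Φ s))
    {a b q : ℝ} (ha : 0 ≤ a) (hab : a ≤ b)
    (hq : ∀ s ∈ Icc a b, ∀ i, inner ℝ (Φ s) (B i (Φ s)) ≤ -q) :
    ‖Φ b‖ ^ 2 ≤ ‖Φ a‖ ^ 2 - 2 * q * (b - a) := by
  obtain ⟨R, hR⟩ := isCompact_Icc.exists_bound_of_continuousOn (s := Icc a b) hΦ.continuousOn
  have hR0 : 0 ≤ R := (norm_nonneg _).trans (hR a ⟨le_rfl, hab⟩)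
  set β := ‖B 0‖ + ‖B 1‖ with hβ
  have hβ0 : 0 ≤ β := by positivity
  have hBi : ∀ i, ‖B i‖ ≤ β := by
    have h0 := norm_nonneg (B 0)
    have h1 := norm_nonneg (B 1)
    intro i
    fin_cases i <;> simp [hβ]
  have hlip := sw_lip B u hu Φ hΦ X hs (a := a) (b := b) (M := β * R) ha
    (fun s hs i => ((B i).le_opNorm _).trans (mul_le_mul (hBi i) (hR s hs) (norm_nonneg _) hβ0))
  have hac : AbsolutelyContinuousOnInterval (fun t => ‖Φ t‖ ^ 2) a b := by
    refine LipschitzOnWith.absolutelyContinuousOnInterval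
      (K := (⟨2 * R * (β * R), by positivity⟩ : NNReal)) ?_
    rw [uIcc_of_le hab]
    refine LipschitzOnWith.of_dist_le_mul fun x hx y hy => ?_
    rw [Real.dist_eq, Real.dist_eq]
    have e : ‖Φ x‖ ^ 2 - ‖Φ y‖ ^ 2 = (‖Φ x‖ + ‖Φ y‖) * (‖Φ x‖ - ‖Φ y‖) := by ring
    rw [e, abs_mul, abs_of_nonneg (by positivity)]
    have h1 := hlip y hy x hx
    have h2 := abs_norm_sub_norm_le (Φ x) (Φ y)
    have h3 := hR x hx
    have h4 := hR y hy
    calc (‖Φ x‖ + ‖Φ y‖) * |‖Φ x‖ - ‖Φ y‖| ≤ (2 * R) * (β * R * |x - y|) := by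
          apply mul_le_mul (by linarith) (h2.trans h1) (abs_nonneg _) (by positivity)
      _ = 2 * R * (β * R) * |x - y| := by ring
  have hder : ∀ᵐ x, x ∈ Ioo a b → deriv (fun t => ‖Φ t‖ ^ 2) x ≤ -(2 * q) := by
    filter_upwards [(sw_meas B u hu Φ hΦ 0 b).ae_hasDerivAt_integral] with x hx hxab
    have h0b : 0 ≤ b := ha.trans hab
    rw [uIcc_of_le h0b] at hx
    have h1 := hx ⟨ha.trans hxab.1.le, hxab.2.le⟩ 0 ⟨le_rfl, h0b⟩
    have h2 : HasDerivAt Φ (B (u x) (Φ x)) x := by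
      refine (h1.const_add X).congr_of_eventuallyEq ?_
      filter_upwards [Ioi_mem_nhds hxab.1] with t ht
      exact hs t (ha.trans (le_of_lt ht))
    have h3 := h2.norm_sq
    rw [h3.deriv]
    have := hq x ⟨hxab.1.le, hxab.2.le⟩ (u x)
    linarith
  have hI := hac.integral_deriv_eq_sub
  have hle : ∫ x in a..b, deriv (fun t => ‖Φ t‖ ^ 2) x ≤ ∫ x in a..b, -(2 * q) := by
    rw [intervalIntegral.integral_of_le hab, intervalIntegral.integral_of_le hab,
      integral_Ioc_eq_integral_Ioo, integral_Ioc_eq_integral_Ioo]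
    have hii := hac.intervalIntegrable_deriv
    rw [intervalIntegrable_iff_integrableOn_Ioo_of_le hab] at hii
    refine setIntegral_mono_ae_restrict hii (integrableOn_const (by simp)) ?_
    exact (ae_restrict_iff' measurableSet_Ioo).2 hder
  rw [hI, intervalIntegral.integral_const, smul_eq_mul] at hle
  linarith

theorem sw_inj_bound (B : Fin 2 → E →L[ℝ] E)
    (hinj : ∀ l ∈ Icc (0:ℝ) 1, ∀ v, B 0 v + l • (B 1 v - B 0 v) = 0 → v = 0) :
    ∃ m > 0, ∀ l ∈ Icc (0:ℝ) 1, ∀ v, m * ‖v‖ ≤ ‖B 0 v + l • (B 1 v - B 0 v)‖ := by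
  have hK : IsCompact (Icc (0:ℝ) 1 ×ˢ Metric.sphere (0:E) 1) :=
    isCompact_Icc.prod (isCompact_sphere 0 1)
  have hcont : Continuous fun p : ℝ × E => ‖B 0 p.2 + p.1 • (B 1 p.2 - B 0 p.2)‖ := by fun_prop
  obtain ⟨m, hm, hm'⟩ := hK.exists_forall_le' hcont.continuousOn (a := 0) (by
    rintro ⟨l, v⟩ ⟨hl, hv⟩
    refine norm_pos_iff.2 fun h => ?_
    have := hinj l hl v h
    simp [this] at hv)
  refine ⟨m, hm, fun l hl v => ?_⟩
  by_cases hv : v = 0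
  · simp [hv]
  have hv' : 0 < ‖v‖ := norm_pos_iff.2 hv
  have h := hm' (l, ‖v‖⁻¹ • v) ⟨hl, by simp [norm_smul, hv'.ne']⟩
  have e : B 0 (‖v‖⁻¹ • v) + l • (B 1 (‖v‖⁻¹ • v) - B 0 (‖v‖⁻¹ • v))
      = ‖v‖⁻¹ • (B 0 v + l • (B 1 v - B 0 v)) := by
    simp only [map_smul]; module
  simp only [e, norm_smul, norm_inv, norm_norm] at h
  rw [inv_mul_eq_div, le_div_iff₀ hv'] at h
  exact h

theorem sw_stable (B : Fin 2 → E →L[ℝ] E) (P : E →L[ℝ] E) (c K : ℝ) (hc : 0 < c) (hK : 0 ≤ K)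
    (hdis : ∀ i v, inner ℝ v (B i v) ≤ -(c * ‖P v‖ ^ 2))
    (hQ : ∀ i v, ‖B i v - P (B i v)‖ ≤ K * ‖P v‖)
    (hinj : ∀ l ∈ Icc (0:ℝ) 1, ∀ v, B 0 v + l • (B 1 v - B 0 v) = 0 → v = 0)
    (u : ℝ → Fin 2) (hu : Measurable u)
    (Φ : ℝ → E) (hΦ : Continuous Φ) (X : E)
    (hs : ∀ t : ℝ, 0 ≤ t → Φ t = X + ∫ s in (0:ℝ)..t, B (u s) (Φ s)) :
    Tendsto Φ atTop (𝓝 0) := by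
  obtain ⟨m, hm, hmv⟩ := sw_inj_bound B hinj
  set β := ‖B 0‖ + ‖B 1‖ with hβ
  have hβ0 : 0 ≤ β := by positivity
  have hBi : ∀ i, ‖B i‖ ≤ β := by
    have h0 := norm_nonneg (B 0)
    have h1 := norm_nonneg (B 1)
    intro i
    fin_cases i <;> simp [hβ]
  have hanti : ∀ a b, 0 ≤ a → a ≤ b → ‖Φ b‖ ^ 2 ≤ ‖Φ a‖ ^ 2 := by
    intro a b ha hab
    have := sw_energy B u hu Φ hΦ X hs (q := 0) ha hab (fun s _ i => by
      have := hdis i (Φ s)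
      have h2 : 0 ≤ c * ‖P (Φ s)‖ ^ 2 := by positivity
      linarith)
    simpa using this
  set R := ‖Φ 0‖ with hR
  have hbd : ∀ t, 0 ≤ t → ‖Φ t‖ ≤ R := fun t ht =>
    le_of_sq_le_sq (hanti 0 t le_rfl ht) (norm_nonneg _)
  have hlip : ∀ a b, 0 ≤ a → a ≤ b → ‖Φ b - Φ a‖ ≤ β * R * (b - a) := by
    intro a b ha hab
    have := sw_lip B u hu Φ hΦ X hs (a := a) (b := b) (M := β * R) ha
      (fun s hs i => ((B i).le_opNorm _).trans
        (mul_le_mul (hBi i) (hbd s (ha.trans hs.1)) (norm_nonneg _) hβ0))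
      a ⟨le_rfl, hab⟩ b ⟨hab, le_rfl⟩
    rwa [abs_of_nonneg (by linarith)] at this
  -- Cauchy property of the energy
  have hcau : ∀ η > 0, ∃ T, 0 ≤ T ∧ ∀ t s, T ≤ t → t ≤ s → ‖Φ t‖ ^ 2 - ‖Φ s‖ ^ 2 < η := by
    intro η hη
    set S := (fun t => ‖Φ t‖ ^ 2) '' Ici (0:ℝ) with hS
    have hSne : S.Nonempty := ⟨_, 0, by simp, rfl⟩
    have hSb : BddBelow S := ⟨0, by rintro _ ⟨t, _, rfl⟩; positivity⟩
    obtain ⟨_, ⟨T, hT, rfl⟩, hlt⟩ := exists_lt_of_csInf_lt hSne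
      (show sInf S < sInf S + η by linarith)
    refine ⟨T, hT, fun t s hTt hts => ?_⟩
    have h1 := hanti T t hT hTt
    have h2 : sInf S ≤ ‖Φ s‖ ^ 2 := csInf_le hSb ⟨s, le_trans hT (hTt.trans hts), rfl⟩
    simp only at hlt
    linarith
  have hy : ∀ ε > 0, ∃ T, 0 ≤ T ∧ ∀ t, T ≤ t → ‖P (Φ t)‖ < ε := by
    intro ε hε
    set L := ‖P‖ * (β * R) + 1 with hL
    have hL0 : 0 < L := by positivity
    set h := ε / (2 * L) with hh
    have hh0 : 0 < h := by positivity
    obtain ⟨T, hT0, hT⟩ := hcau (2 * (c * (ε / 2) ^ 2) * h) (by positivity)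
    refine ⟨T, hT0, fun t ht => ?_⟩
    by_contra! hcon
    have ht0 : 0 ≤ t := hT0.trans ht
    have h1 := hT t (t + h) ht (by linarith)
    have h2 := sw_energy B u hu Φ hΦ X hs (q := c * (ε / 2) ^ 2) ht0
      (show t ≤ t + h by linarith) (fun s hs i => by
        refine (hdis i (Φ s)).trans (neg_le_neg ?_)
        have h3 := hlip t s ht0 hs.1
        have h4 : ‖P (Φ s - Φ t)‖ ≤ ε / 2 := by
          calc ‖P (Φ s - Φ t)‖ ≤ ‖P‖ * ‖Φ s - Φ t‖ := P.le_opNorm _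
            _ ≤ ‖P‖ * (β * R * (s - t)) := by gcongr
            _ = (‖P‖ * (β * R)) * (s - t) := by ring
            _ ≤ L * h := by
                apply mul_le_mul (by linarith) (by linarith [hs.2]) (by linarith [hs.1]) hL0.le
            _ = ε / 2 := by rw [hh]; field_simp
        have h5 : ‖P (Φ t)‖ ≤ ‖P (Φ s)‖ + ‖P (Φ s - Φ t)‖ := by
          have : P (Φ t) = P (Φ s) - P (Φ s - Φ t) := by simp
          rw [this]; exact norm_sub_le _ _
        have h6 : ε / 2 ≤ ‖P (Φ s)‖ := by linarith
        gcongr)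
    have : t + h - t = h := by ring
    rw [this] at h2
    linarith
  rw [Metric.tendsto_atTop]
  intro ε₀ hε₀
  set N := (1 + β) * (2 + K) with hN
  have hN0 : 0 < N := by positivity
  set ε := m * ε₀ / (2 * N) with hε
  have hε0 : 0 < ε := by positivity
  obtain ⟨T, hT0, hT⟩ := hy ε hε0
  refine ⟨T, fun t ht => ?_⟩
  have ht0 : 0 ≤ t := hT0.trans ht
  have hwin : ∀ s ∈ Icc t (t + 1), ‖Φ s - Φ t‖ ≤ (2 + K) * ε := by
    intro s hst
    have hs0 : 0 ≤ s := ht0.trans hst.1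
    have h1 : ‖P (Φ s - Φ t)‖ ≤ 2 * ε := by
      rw [map_sub]
      refine (norm_sub_le _ _).trans ?_
      have := hT s (ht.trans hst.1)
      have := hT t ht
      linarith
    have h2 : ‖(ContinuousLinearMap.id ℝ E - P) (Φ s - Φ t)‖ ≤ K * ε := by
      rw [sw_diff B u hu Φ hΦ X hs ht0 hs0,
        ← ContinuousLinearMap.intervalIntegral_comp_comm _ (sw_meas B u hu Φ hΦ _ _)]
      have h3 := intervalIntegral.norm_integral_le_of_norm_le_const (a := t) (b := s) (C := K * ε)
        (f := fun r => (ContinuousLinearMap.id ℝ E - P) (B (u r) (Φ r))) (fun r hr => by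
          rw [uIoc_of_le hst.1] at hr
          have := hQ (u r) (Φ r)
          have h4 := hT r (ht.trans hr.1.le)
          refine this.trans ?_
          gcongr)
      refine h3.trans ?_
      rw [abs_of_nonneg (by linarith [hst.1])]
      have h5 : 0 ≤ K * ε := by positivity
      nlinarith [hst.2]
    have h3 : Φ s - Φ t = P (Φ s - Φ t) + (ContinuousLinearMap.id ℝ E - P) (Φ s - Φ t) := by
      simp
    rw [h3]
    refine (norm_add_le _ _).trans ?_
    linarith
  set χ : ℝ → ℝ := fun s => if u s = 1 then 1 else 0 with hχ
  have hχi : IntervalIntegrable χ volume t (t + 1) := by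
    refine (intervalIntegrable_const (c := (1:ℝ))).mono_fun
      (Measurable.ite (hu (measurableSet_singleton 1)) measurable_const
        measurable_const).aestronglyMeasurable (Eventually.of_forall fun s => ?_)
    simp only [hχ]; split_ifs <;> simp
  set l := ∫ s in t..(t + 1), χ s with hl
  have hl01 : l ∈ Icc (0:ℝ) 1 := by
    constructor
    · refine intervalIntegral.integral_nonneg (by linarith) fun s _ => ?_
      simp only [hχ]; split_ifs <;> simp
    · have := intervalIntegral.integral_mono_on (by linarith) hχi
        (intervalIntegrable_const (c := (1:ℝ))) (fun s _ => by
          simp only [hχ]; split_ifs <;> simp)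
      simpa using this
  have hint : ∫ s in t..(t + 1), B (u s) (Φ t) = B 0 (Φ t) + l • (B 1 (Φ t) - B 0 (Φ t)) := by
    have e : (fun s => B (u s) (Φ t)) = fun s => B 0 (Φ t) + χ s • (B 1 (Φ t) - B 0 (Φ t)) := by
      funext s
      simp only [hχ]
      split_ifs with h
      · rw [h]; simp
      · have : u s = 0 := by omega
        rw [this]; simp
    rw [e, intervalIntegral.integral_add intervalIntegrable_const ⟨hχi.1.smul_const _, hχi.2.smul_const _⟩,
      intervalIntegral.integral_smul_const]
    simp [hl]
  have hfin : ‖B 0 (Φ t) + l • (B 1 (Φ t) - B 0 (Φ t))‖ ≤ N * ε := by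
    have i1 := sw_meas B u hu (fun _ => Φ t) continuous_const t (t + 1)
    have i2 := sw_meas B u hu Φ hΦ t (t + 1)
    have e1 : ∫ s in t..(t + 1), B (u s) (Φ t) =
        (Φ (t + 1) - Φ t) - ∫ s in t..(t + 1), (B (u s) (Φ s) - B (u s) (Φ t)) := by
      rw [intervalIntegral.integral_sub i2 i1, sw_diff B u hu Φ hΦ X hs ht0 (by linarith)]
      simp
    have e2 : ‖∫ s in t..(t + 1), (B (u s) (Φ s) - B (u s) (Φ t))‖ ≤ β * ((2 + K) * ε) := by
      have h3 := intervalIntegral.norm_integral_le_of_norm_le_const (a := t) (b := t + 1)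
        (C := β * ((2 + K) * ε))
        (f := fun s => B (u s) (Φ s) - B (u s) (Φ t)) (fun r hr => by
          rw [uIoc_of_le (by linarith)] at hr
          rw [← map_sub]
          exact ((B (u r)).le_opNorm _).trans
            (mul_le_mul (hBi _) (hwin r ⟨hr.1.le, hr.2⟩) (norm_nonneg _) hβ0))
      simpa using h3
    rw [← hint, e1]
    refine (norm_sub_le _ _).trans ?_
    have := hwin (t + 1) ⟨by linarith, le_rfl⟩
    rw [hN]
    linarith
  have h1 := (hmv l hl01 (Φ t)).trans hfin
  have h2 : N * ε = m * (ε₀ / 2) := by rw [hε]; field_simp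
  rw [h2] at h1
  have h3 := le_of_mul_le_mul_left h1 hm
  rw [dist_zero_right]
  linarith

theorem sw_exp_deriv (A : E →L[ℝ] E) (v : E) (s : ℝ) :
    HasDerivAt (fun s : ℝ => NormedSpace.exp (s • A) v) (A (NormedSpace.exp (s • A) v)) s := by
  have h := (hasDerivAt_exp_smul_const' (𝕂 := ℝ) A s).clm_apply (hasDerivAt_const s v)
  simpa using h

theorem sw_exp_deriv' (A : E →L[ℝ] E) (v : E) (s : ℝ) :
    HasDerivAt (fun s : ℝ => NormedSpace.exp (s • A) v) (NormedSpace.exp (s • A) (A v)) s := by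
  have h := (hasDerivAt_exp_smul_const (𝕂 := ℝ) A s).clm_apply (hasDerivAt_const s v)
  simpa using h

theorem sw_exp_contr (A : E →L[ℝ] E) (hA : ∀ v, inner ℝ v (A v) ≤ 0) (v : E) {s : ℝ}
    (hs : 0 ≤ s) : ‖NormedSpace.exp (s • A) v‖ ≤ ‖v‖ := by
  have h1 : Antitone fun s : ℝ => ‖NormedSpace.exp (s • A) v‖ ^ 2 := by
    refine antitone_of_hasDerivAt_nonpos (fun x => (sw_exp_deriv A v x).norm_sq) fun x => ?_
    have := hA (NormedSpace.exp (x • A) v)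
    simp only [Pi.zero_apply]
    linarith
  have h2 := h1 hs
  simp only [zero_smul, NormedSpace.exp_zero, one_apply_eq_self] at h2
  exact le_of_sq_le_sq h2 (norm_nonneg _)

theorem sw_exp_one (A : E →L[ℝ] E) (hA : ∀ v, inner ℝ v (A v) ≤ 0) (v : E) {s : ℝ}
    (hs : 0 ≤ s) : ‖NormedSpace.exp (s • A) v - v‖ ≤ s * ‖A v‖ := by
  have h := (convex_Icc 0 s).norm_image_sub_le_of_norm_hasDerivWithin_le (C := ‖A v‖)
    (x := 0) (y := s)
    (fun x _ => (sw_exp_deriv' A v x).hasDerivWithinAt)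
    (fun x hx => sw_exp_contr A hA (A v) hx.1) ⟨le_rfl, hs⟩ ⟨hs, le_rfl⟩
  simp only [zero_smul, NormedSpace.exp_zero, one_apply_eq_self, sub_zero,
    Real.norm_eq_abs, abs_of_nonneg hs] at h
  linarith

theorem sw_exp_two (A : E →L[ℝ] E) (hA : ∀ v, inner ℝ v (A v) ≤ 0) (v : E) {s : ℝ}
    (hs : 0 ≤ s) : ‖NormedSpace.exp (s • A) v - v - s • A v‖ ≤ s ^ 2 * ‖A (A v)‖ := by
  have h := (convex_Icc 0 s).norm_image_sub_le_of_norm_hasDerivWithin_le (C := s * ‖A (A v)‖)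
    (x := 0) (y := s) (f := fun s : ℝ => NormedSpace.exp (s • A) v - v - s • A v)
    (f' := fun s : ℝ => NormedSpace.exp (s • A) (A v) - A v)
    (fun x _ => by
      have := (((sw_exp_deriv' A v x).sub_const v).sub
        ((hasDerivAt_id x).smul_const (A v))).hasDerivWithinAt (s := Icc 0 s)
      simp only [one_smul] at this
      exact this)
    (fun x hx => (sw_exp_one A hA (A v) hx.1).trans (by
      have := hx.2
      gcongr)) ⟨le_rfl, hs⟩ ⟨hs, le_rfl⟩
  simp only [zero_smul, NormedSpace.exp_zero, one_apply_eq_self, sub_zero, sub_self,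
    Real.norm_eq_abs, abs_of_nonneg hs] at h
  linarith

theorem sw_exp_comp (B : Fin 2 → E →L[ℝ] E) (hB : ∀ i v, inner ℝ v (B i v) ≤ 0) (e : E)
    {a b h : ℝ} (ha : 0 ≤ a) (hb : 0 ≤ b) (hah : a ≤ h) (hbh : b ≤ h)
    (he : a • B 0 e + b • B 1 e = 0) :
    ‖NormedSpace.exp (b • B 1) (NormedSpace.exp (a • B 0) e) - e‖ ≤
      h ^ 2 * (‖B 0 (B 0 e)‖ + ‖B 1 (B 1 e)‖ + ‖B 1 (B 0 e)‖) := by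
  have e1 : NormedSpace.exp (b • B 1) (NormedSpace.exp (a • B 0) e) - e =
      NormedSpace.exp (b • B 1) (NormedSpace.exp (a • B 0) e - e - a • B 0 e)
      + (NormedSpace.exp (b • B 1) e - e - b • B 1 e)
      + a • (NormedSpace.exp (b • B 1) (B 0 e) - B 0 e) + (a • B 0 e + b • B 1 e) := by
    simp only [map_sub, map_smul, smul_sub]
    abel
  rw [e1, he, add_zero]
  have h1 := (sw_exp_contr (B 1) (hB 1) (NormedSpace.exp (a • B 0) e - e - a • B 0 e) hb).trans
    (sw_exp_two (B 0) (hB 0) e ha)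
  have h2 := sw_exp_two (B 1) (hB 1) e hb
  have h3 := sw_exp_one (B 1) (hB 1) (B 0 e) hb
  have h4 : ‖a • (NormedSpace.exp (b • B 1) (B 0 e) - B 0 e)‖ ≤ a * (b * ‖B 1 (B 0 e)‖) := by
    rw [norm_smul, Real.norm_eq_abs, abs_of_nonneg ha]
    gcongr
  have k1 : a ^ 2 * ‖B 0 (B 0 e)‖ ≤ h ^ 2 * ‖B 0 (B 0 e)‖ := by gcongr
  have k2 : b ^ 2 * ‖B 1 (B 1 e)‖ ≤ h ^ 2 * ‖B 1 (B 1 e)‖ := by gcongr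
  have k3 : a * (b * ‖B 1 (B 0 e)‖) ≤ h ^ 2 * ‖B 1 (B 0 e)‖ := by
    rw [← mul_assoc, sq]
    have : 0 ≤ h := ha.trans hah
    gcongr
  refine (norm_add_le _ _).trans ((add_le_add_left (norm_add_le _ _) _).trans ?_)
  linarith

/-- Partial products of the piecewise constant flow. -/
def swPsi (B : Fin 2 → E →L[ℝ] E) (σ : ℕ → Fin 2) (T : ℕ → ℝ) (X : E) : ℕ → ℝ → E
  | 0, _ => X
  | n + 1, t => NormedSpace.exp ((min t (T (n + 1)) - min t (T n)) • B (σ n)) (swPsi B σ T X n t)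

theorem swPsi_cont (B : Fin 2 → E →L[ℝ] E) (σ : ℕ → Fin 2) (T : ℕ → ℝ) (X : E) (n : ℕ) :
    Continuous (swPsi B σ T X n) := by
  induction n with
  | zero => exact continuous_const
  | succ n ih =>
    have h1 : Continuous fun s : ℝ => NormedSpace.exp (s • B (σ n)) :=
      continuous_iff_continuousAt.2 fun s =>
        (hasDerivAt_exp_smul_const' (𝕂 := ℝ) (B (σ n)) s).continuousAt
    have h2 : Continuous fun t : ℝ => min t (T (n + 1)) - min t (T n) := by fun_prop
    exact (h1.comp h2).clm_apply ih

theorem sw_exists (B : Fin 2 → E →L[ℝ] E) (σ : ℕ → Fin 2) (T : ℕ → ℝ) (X : E)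
    (hT : Monotone T) (hT0 : T 0 = 0) (hTinf : ∀ x, ∃ n, x < T n)
    (u : ℝ → Fin 2) (hu : Measurable u)
    (huσ : ∀ i, ∀ s ∈ Ioo (T i) (T (i + 1)), u s = σ i) :
    ∃ Φ : ℝ → E, Continuous Φ ∧ Φ 0 = X ∧
      (∀ t : ℝ, 0 ≤ t → Φ t = X + ∫ s in (0:ℝ)..t, B (u s) (Φ s)) ∧
      ∀ i, Φ (T (i + 1)) = NormedSpace.exp ((T (i + 1) - T i) • B (σ i)) (Φ (T i)) := by
  set Ψ := swPsi B σ T X with hΨ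
  have hsucc : ∀ n t, Ψ (n + 1) t =
    NormedSpace.exp ((min t (T (n + 1)) - min t (T n)) • B (σ n)) (Ψ n t) := fun n t => rfl
  have hstab : ∀ n m, n ≤ m → ∀ t, t ≤ T n → Ψ m t = Ψ n t := by
    intro n m hnm
    induction m, hnm using Nat.le_induction with
    | base => intros; rfl
    | succ m hnm ih =>
      intro t ht
      have h1 : t ≤ T m := ht.trans (hT hnm)
      rw [hsucc, min_eq_left h1, min_eq_left (h1.trans (hT m.le_succ)), ih t ht]
      simp
  have hconst : ∀ n t, T n ≤ t → Ψ n t = Ψ n (T n) := by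
    have : ∀ n t t', T n ≤ t → T n ≤ t' → Ψ n t = Ψ n t' := by
      intro n
      induction n with
      | zero => intros; rfl
      | succ n ih =>
        intro t t' h h'
        have h1 := hT n.le_succ
        rw [hsucc, hsucc, min_eq_right h, min_eq_right h', min_eq_right (h1.trans h),
          min_eq_right (h1.trans h'), ih t t' (h1.trans h) (h1.trans h')]
    exact fun n t h => this n t _ h le_rfl
  choose N hN using hTinf
  set Φ : ℝ → E := fun t => Ψ (N t) t with hΦdef
  have hΦ : ∀ n t, t ≤ T n → Φ t = Ψ n t := by
    intro n t ht
    rcases le_total n (N t) with h | h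
    · exact hstab n _ h t ht
    · exact (hstab _ n h t (hN t).le).symm
  have hΦc : Continuous Φ := by
    refine continuous_iff_continuousAt.2 fun t => ?_
    refine ((swPsi_cont B σ T X (N t)).continuousAt (x := t)).congr ?_
    filter_upwards [Iio_mem_nhds (hN t)] with s hs
    exact (hΦ _ s (le_of_lt hs)).symm
  have hΦ0 : Φ 0 = X := hΦ 0 0 hT0.ge
  refine ⟨Φ, hΦc, hΦ0, ?_, ?_⟩
  · intro t ht
    have := integral_eq_of_hasDerivAt_off_countable_of_le Φ (fun s => B (u s) (Φ s)) ht
      (countable_range T) hΦc.continuousOn (by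
        rintro x ⟨hx, hxT⟩
        have hex : ∃ n, x < T n := ⟨N x, hN x⟩
        classical
        obtain ⟨i, hi⟩ : ∃ i, Nat.find hex = i + 1 := by
          refine Nat.exists_eq_succ_of_ne_zero fun h0 => ?_
          have := Nat.find_spec hex
          rw [h0, hT0] at this
          exact absurd hx.1 (not_lt.2 this.le)
        have h1 : x < T (i + 1) := hi ▸ Nat.find_spec hex
        have h2 : T i < x := by
          have := Nat.find_min hex (m := i) (by omega)
          exact lt_of_le_of_ne (not_lt.1 this) fun h => hxT ⟨i, h⟩
        have hloc : ∀ s ∈ Ioo (T i) (T (i + 1)),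
            Φ s = NormedSpace.exp ((s - T i) • B (σ i)) (Ψ i (T i)) := by
          intro s hs
          rw [hΦ (i + 1) s hs.2.le, hsucc, min_eq_left hs.2.le, min_eq_right hs.1.le,
            hconst i s hs.1.le]
        have h3 : HasDerivAt (fun s : ℝ => NormedSpace.exp ((s - T i) • B (σ i)) (Ψ i (T i)))
            (B (σ i) (NormedSpace.exp ((x - T i) • B (σ i)) (Ψ i (T i)))) x :=
          HasDerivAt.comp_sub_const x (T i) (sw_exp_deriv (B (σ i)) (Ψ i (T i)) (x - T i))
        rw [huσ i x ⟨h2, h1⟩, hloc x ⟨h2, h1⟩]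
        refine h3.congr_of_eventuallyEq ?_
        filter_upwards [Ioo_mem_nhds h2 h1] with s hs using hloc s hs)
      (sw_meas B u hu Φ hΦc 0 t)
    rw [this, hΦ0]; simp
  · intro i
    have h1 := hT i.le_succ
    rw [hΦ (i + 1) _ le_rfl, hΦ i _ le_rfl, hsucc, min_eq_left le_rfl, min_eq_right h1,
      hconst i _ h1]

theorem sw_unstable (B : Fin 2 → E →L[ℝ] E) (hB : ∀ i v, inner ℝ v (B i v) ≤ 0) (e : E)
    (he0 : e ≠ 0) (l : ℝ) (hl : l ∈ Icc (0:ℝ) 1) (he : (1 - l) • B 0 e + l • B 1 e = 0) :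
    ∃ u : ℝ → Fin 2, Measurable u ∧ ∃ Φ : ℝ → E, Continuous Φ ∧
      (∀ t : ℝ, 0 ≤ t → Φ t = e + ∫ s in (0:ℝ)..t, B (u s) (Φ s)) ∧
      ¬ Tendsto Φ atTop (𝓝 0) := by
  set K := ‖B 0 (B 0 e)‖ + ‖B 1 (B 1 e)‖ + ‖B 1 (B 0 e)‖ with hK
  have hK0 : 0 ≤ K := by positivity
  have hsum : Summable fun n : ℕ => 1 / ((n : ℝ) + 1) ^ 2 := by
    have := (summable_nat_add_iff 1).2 (Real.summable_one_div_nat_pow.2 one_lt_two)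
    simpa using this
  set Z := ∑' n : ℕ, 1 / ((n : ℝ) + 1) ^ 2 with hZ
  have hZ0 : 0 ≤ Z := tsum_nonneg fun n => by positivity
  have hen : 0 < ‖e‖ := norm_pos_iff.2 he0
  set δ := √(‖e‖ / (2 * (K * Z + 1))) with hδ
  have hδ0 : 0 < δ := Real.sqrt_pos.2 (by positivity)
  have hδ2 : δ ^ 2 = ‖e‖ / (2 * (K * Z + 1)) := Real.sq_sqrt (by positivity)
  set h : ℕ → ℝ := fun n => δ * (1 / ((n : ℝ) + 1)) with hh
  have hpos : ∀ n, 0 ≤ h n := fun n => by simp only [hh]; positivity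
  set S : ℕ → ℝ := fun n => ∑ j ∈ Finset.range n, h j with hS
  have hSs : ∀ n, S (n + 1) = S n + h n := fun n => Finset.sum_range_succ _ _
  have hSinf : Tendsto S atTop atTop := by
    have := Real.tendsto_sum_range_one_div_nat_succ_atTop.const_mul_atTop hδ0
    simpa only [hS, hh, Finset.mul_sum] using this
  set T : ℕ → ℝ := fun i => S (i / 2) + if i % 2 = 0 then 0 else (1 - l) * h (i / 2) with hTdef
  have hTe : ∀ n, T (2 * n) = S n := fun n => by simp [hTdef]
  have hTo : ∀ n, T (2 * n + 1) = S n + (1 - l) * h n := fun n => by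
    have h1 : (2 * n + 1) / 2 = n := by omega
    have h2 : (2 * n + 1) % 2 = 1 := by omega
    simp [hTdef, h1, h2]
  have hTe' : ∀ n, T (2 * n + 1 + 1) = S n + h n := fun n => by
    rw [← hSs, ← hTe]; congr 1
  have hTm : Monotone T := by
    refine monotone_nat_of_le_succ fun i => ?_
    rcases Nat.even_or_odd' i with ⟨n, rfl | rfl⟩
    · rw [hTe, hTo]
      have := mul_nonneg (sub_nonneg.2 hl.2) (hpos n)
      linarith
    · rw [hTe', hTo]
      have := mul_nonneg hl.1 (hpos n)
      linarith
  have hT0 : T 0 = 0 := by simp [hTdef, hS]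
  have hTinf : ∀ x, ∃ n, x < T n := fun x => by
    obtain ⟨n, hn⟩ := (hSinf.eventually_gt_atTop x).exists
    exact ⟨2 * n, by rwa [hTe]⟩
  set W : Set ℝ := ⋃ n : ℕ, Ioo (T (2 * n + 1)) (T (2 * n + 1 + 1)) with hW
  have hWm : MeasurableSet W := MeasurableSet.iUnion fun n => measurableSet_Ioo
  classical
  set u : ℝ → Fin 2 := fun s => if s ∈ W then 1 else 0 with hudef
  have hu : Measurable u := Measurable.ite hWm measurable_const measurable_const
  set σ : ℕ → Fin 2 := fun i => if i % 2 = 0 then 0 else 1 with hσ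
  have hσe : ∀ n, σ (2 * n) = 0 := fun n => by simp [hσ]
  have hσo : ∀ n, σ (2 * n + 1) = 1 := fun n => by
    have h2 : (2 * n + 1) % 2 = 1 := by omega
    simp [hσ, h2]
  have huσ : ∀ i, ∀ s ∈ Ioo (T i) (T (i + 1)), u s = σ i := by
    intro i s hs
    rcases Nat.even_or_odd' i with ⟨n, rfl | rfl⟩
    · rw [hσe]
      have : s ∉ W := by
        intro hsW
        obtain ⟨m, hm⟩ := mem_iUnion.1 hsW
        rcases lt_or_ge m n with hmn | hmn
        · have := hTm (show 2 * m + 1 + 1 ≤ 2 * n by omega)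
          exact absurd hm.2 (not_lt.2 (this.trans hs.1.le))
        · have := hTm (show 2 * n + 1 ≤ 2 * m + 1 by omega)
          exact absurd hm.1 (not_lt.2 (hs.2.le.trans this))
      simp [hudef, this]
    · rw [hσo]
      have : s ∈ W := mem_iUnion.2 ⟨n, hs⟩
      simp [hudef, this]
  obtain ⟨Φ, hΦc, hΦ0, hsol, hstep⟩ := sw_exists B σ T e hTm hT0 hTinf u hu huσ
  refine ⟨u, hu, Φ, hΦc, hsol, fun hlim => ?_⟩
  have hd : ∀ n, ‖Φ (S n) - e‖ ≤ K * ∑ j ∈ Finset.range n, h j ^ 2 := by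
    intro n
    induction n with
    | zero => simp [hS, hΦ0]
    | succ n ih =>
      have h1 := hstep (2 * n)
      have h2 := hstep (2 * n + 1)
      rw [hσe, hTe, hTo] at h1
      rw [hσo, hTe', hTo, h1, ← hSs] at h2
      have a1 : S n + (1 - l) * h n - S n = (1 - l) * h n := by ring
      have a2 : S (n + 1) - (S n + (1 - l) * h n) = l * h n := by rw [hSs]; ring
      rw [a1, a2] at h2
      have hl1 : 0 ≤ 1 - l := sub_nonneg.2 hl.2
      have c1 := sw_exp_comp B hB e (a := (1 - l) * h n) (b := l * h n) (h := h n)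
        (mul_nonneg hl1 (hpos n)) (mul_nonneg hl.1 (hpos n))
        (by nlinarith [hl.1, hpos n]) (by nlinarith [hl.2, hpos n]) (by
          have : ((1 - l) * h n) • B 0 e + (l * h n) • B 1 e
            = h n • ((1 - l) • B 0 e + l • B 1 e) := by module
          rw [this, he, smul_zero])
      have c2 := (sw_exp_contr (B 1) (hB 1) (NormedSpace.exp (((1 - l) * h n) • B 0) (Φ (S n) - e))
        (mul_nonneg hl.1 (hpos n))).trans
        (sw_exp_contr (B 0) (hB 0) (Φ (S n) - e) (mul_nonneg hl1 (hpos n)))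
      rw [h2, Finset.sum_range_succ]
      have e3 : ∀ (M N : E →L[ℝ] E) (v : E), M (N v) - e = M (N (v - e)) + (M (N e) - e) := by
        intro M N v; simp
      rw [e3]
      refine (norm_add_le _ _).trans ?_
      rw [← hK] at c1
      linarith
  have hd2 : ∀ n, ‖e‖ / 2 ≤ ‖Φ (S n)‖ := by
    intro n
    have h1 := hd n
    have h2 : ∑ j ∈ Finset.range n, h j ^ 2 ≤ δ ^ 2 * Z := by
      have : ∑ j ∈ Finset.range n, h j ^ 2
          = δ ^ 2 * ∑ j ∈ Finset.range n, 1 / ((j : ℝ) + 1) ^ 2 := by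
        rw [Finset.mul_sum]
        refine Finset.sum_congr rfl fun j _ => ?_
        simp only [hh]; rw [mul_pow, _root_.one_div_pow]
      rw [this]
      gcongr
      exact hsum.sum_le_tsum _ (fun j _ => by positivity)
    have h3 : K * (δ ^ 2 * Z) ≤ ‖e‖ / 2 := by
      rw [hδ2]
      have : K * (‖e‖ / (2 * (K * Z + 1)) * Z) = ‖e‖ / 2 * ((K * Z) / (K * Z + 1)) := by
        field_simp
      rw [this]
      have h4 : (K * Z) / (K * Z + 1) ≤ 1 := by
        rw [div_le_one (by positivity)]; linarith
      nlinarith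
    have h4 : K * ∑ j ∈ Finset.range n, h j ^ 2 ≤ K * (δ ^ 2 * Z) := by gcongr
    have h5 : ‖e‖ ≤ ‖Φ (S n)‖ + ‖Φ (S n) - e‖ := by
      have : e = Φ (S n) - (Φ (S n) - e) := by simp
      conv_lhs => rw [this]
      exact norm_sub_le _ _
    linarith
  have hlim2 := (hlim.comp hSinf).norm
  have := ge_of_tendsto' hlim2 hd2
  rw [norm_zero] at this
  linarith
end Abstract

section Concrete
open Set Filter Topology

theorem cc_apply {k k' : ℕ} (C : Matrix (Fin k') (Fin k) ℝ) (D : Matrix (Fin k') (Fin k') ℝ)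
    (v : EuclideanSpace ℝ (Fin k ⊕ Fin k')) :
    (Matrix.toEuclideanLin (Matrix.fromBlocks 0 (-Cᵀ) C D) v).ofLp =
      Sum.elim (-(Cᵀ *ᵥ (v.ofLp ∘ Sum.inr)))
        (C *ᵥ (v.ofLp ∘ Sum.inl) + D *ᵥ (v.ofLp ∘ Sum.inr)) := by
  simp [Matrix.toLpLin_apply, Matrix.fromBlocks_mulVec, Matrix.neg_mulVec]

theorem cc_P {k k' : ℕ} (v : EuclideanSpace ℝ (Fin k ⊕ Fin k')) :
    (Matrix.toEuclideanLin (Matrix.fromBlocks (0 : Matrix (Fin k) (Fin k) ℝ) 0 0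
      (1 : Matrix (Fin k') (Fin k') ℝ)) v).ofLp =
      Sum.elim (0 : Fin k → ℝ) (v.ofLp ∘ Sum.inr) := by
  simp [Matrix.toLpLin_apply, Matrix.fromBlocks_mulVec]

theorem cc_inner {k k' : ℕ} (C : Matrix (Fin k') (Fin k) ℝ) (D : Matrix (Fin k') (Fin k') ℝ)
    (v : EuclideanSpace ℝ (Fin k ⊕ Fin k')) :
    inner ℝ v (Matrix.toEuclideanLin (Matrix.fromBlocks 0 (-Cᵀ) C D) v) =
      (v.ofLp ∘ Sum.inr) ⬝ᵥ (D *ᵥ (v.ofLp ∘ Sum.inr)) := by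
  rw [EuclideanSpace.inner_eq_star_dotProduct, cc_apply]
  simp only [star_trivial]
  have h : v.ofLp = Sum.elim (v.ofLp ∘ Sum.inl) (v.ofLp ∘ Sum.inr) := by simp
  generalize v.ofLp ∘ Sum.inl = x at *
  generalize v.ofLp ∘ Sum.inr = y at *
  rw [h, sumElim_dotProduct_sumElim, neg_dotProduct, add_dotProduct, dotProduct_comm (C *ᵥ x) y,
    dotProduct_mulVec y C x, Matrix.mulVec_transpose, dotProduct_comm (D *ᵥ y) y]
  ring

theorem cc_normP {k k' : ℕ} (v : EuclideanSpace ℝ (Fin k ⊕ Fin k')) :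
    ‖Matrix.toEuclideanLin (Matrix.fromBlocks (0 : Matrix (Fin k) (Fin k) ℝ) 0 0
      (1 : Matrix (Fin k') (Fin k') ℝ)) v‖ ^ 2 =
      (v.ofLp ∘ Sum.inr) ⬝ᵥ (v.ofLp ∘ Sum.inr) := by
  rw [← real_inner_self_eq_norm_sq, EuclideanSpace.inner_eq_star_dotProduct, cc_P]
  simp [sumElim_dotProduct_sumElim]

theorem cc_coercive {k' : ℕ} (D : Matrix (Fin k') (Fin k') ℝ)
    (hD : ∀ y : Fin k' → ℝ, y ≠ 0 → y ⬝ᵥ ((Dᵀ + D) *ᵥ y) < 0) :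
    ∃ c > 0, ∀ y : Fin k' → ℝ, y ⬝ᵥ (D *ᵥ y) ≤ -(c * (y ⬝ᵥ y)) := by
  have h1 : ∀ y : Fin k' → ℝ, y ≠ 0 → y ⬝ᵥ (D *ᵥ y) < 0 := by
    intro y hy
    have h := hD y hy
    have e : y ⬝ᵥ (Dᵀ *ᵥ y) = y ⬝ᵥ (D *ᵥ y) := by
      rw [Matrix.mulVec_transpose, dotProduct_comm, dotProduct_mulVec]
    rw [Matrix.add_mulVec, dotProduct_add, e] at h
    linarith
  have hcont : Continuous fun y : EuclideanSpace ℝ (Fin k') => -(y.ofLp ⬝ᵥ (D *ᵥ y.ofLp)) := by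
    have h0 : Continuous fun y : EuclideanSpace ℝ (Fin k') => y.ofLp :=
      PiLp.continuous_ofLp 2 _
    exact (h0.dotProduct (continuous_const.matrix_mulVec h0)).neg
  obtain ⟨c, hc, hcv⟩ := (isCompact_sphere (0 : EuclideanSpace ℝ (Fin k')) 1).exists_forall_le'
    hcont.continuousOn (a := 0) (by
      intro y hy
      have : y.ofLp ≠ 0 := by
        intro h
        have : y = 0 := by ext i; simp [h]
        simp [this] at hy
      have := h1 _ this
      linarith)
  refine ⟨c, hc, fun y => ?_⟩
  by_cases hy : y = 0
  · simp [hy]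
  set w : EuclideanSpace ℝ (Fin k') := WithLp.toLp 2 y with hw
  have hw0 : w ≠ 0 := by
    intro h
    apply hy
    have := congrArg WithLp.ofLp h
    simpa [hw] using this
  have hn : 0 < ‖w‖ := norm_pos_iff.2 hw0
  have hn2 : ‖w‖ ^ 2 = y ⬝ᵥ y := by
    rw [← real_inner_self_eq_norm_sq, EuclideanSpace.inner_eq_star_dotProduct]
    simp [hw]
  have h := hcv (‖w‖⁻¹ • w) (by simp [norm_smul, hn.ne'])
  have e : (‖w‖⁻¹ • w).ofLp ⬝ᵥ (D *ᵥ (‖w‖⁻¹ • w).ofLp) = (y ⬝ᵥ (D *ᵥ y)) / ‖w‖ ^ 2 := by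
    simp only [hw, WithLp.ofLp_smul, Matrix.mulVec_smul, smul_dotProduct, dotProduct_smul,
      smul_eq_mul]
    field_simp
  rw [e, ← neg_div, le_div_iff₀ (by positivity), hn2] at h
  linarith

end Concrete

/-- Let `D₀ᵀ+D₀` and `D₁ᵀ+D₁` be negative definite. The switched
system defined by the block matrices `B₀ = [[0, -C₀ᵀ],[C₀, D₀]]` and
`B₁ = [[0, -C₁ᵀ],[C₁, D₁]]` is GUAS if and only if for every `λ ∈ [0,1]` the matrix
`C_λ = (1-λ)C₀ + λC₁` is one-to-one. -/
theorem isGUAS_zero_dynamics_iff_injective {k k' : ℕ}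
    (C₀ C₁ : Matrix (Fin k') (Fin k) ℝ)
    (D₀ D₁ : Matrix (Fin k') (Fin k') ℝ)
    (hD₀ : ∀ y : Fin k' → ℝ, y ≠ 0 → y ⬝ᵥ ((D₀ᵀ + D₀) *ᵥ y) < 0)
    (hD₁ : ∀ y : Fin k' → ℝ, y ≠ 0 → y ⬝ᵥ ((D₁ᵀ + D₁) *ᵥ y) < 0) :
    IsGUAS (Matrix.fromBlocks 0 (-C₀ᵀ) C₀ D₀) (Matrix.fromBlocks 0 (-C₁ᵀ) C₁ D₁) ↔
      ∀ l ∈ Set.Icc (0:ℝ) 1,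
        ∀ x : Fin k → ℝ, ((1 - l) • C₀ + l • C₁) *ᵥ x = 0 → x = 0 := by
  classical
  set b0 := Matrix.fromBlocks 0 (-C₀ᵀ) C₀ D₀ with hb0
  set b1 := Matrix.fromBlocks 0 (-C₁ᵀ) C₁ D₁ with hb1
  set B : Fin 2 → EuclideanSpace ℝ (Fin k ⊕ Fin k') →L[ℝ] EuclideanSpace ℝ (Fin k ⊕ Fin k') :=
    fun i => (Matrix.toEuclideanLin (![b0, b1] i)).toContinuousLinearMap with hB
  set P : EuclideanSpace ℝ (Fin k ⊕ Fin k') →L[ℝ] EuclideanSpace ℝ (Fin k ⊕ Fin k') :=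
    (Matrix.toEuclideanLin (Matrix.fromBlocks (0 : Matrix (Fin k) (Fin k) ℝ) 0 0
      (1 : Matrix (Fin k') (Fin k') ℝ))).toContinuousLinearMap with hP
  have B0 : ∀ v, B 0 v = Matrix.toEuclideanLin (Matrix.fromBlocks 0 (-C₀ᵀ) C₀ D₀) v :=
    fun v => rfl
  have B1 : ∀ v, B 1 v = Matrix.toEuclideanLin (Matrix.fromBlocks 0 (-C₁ᵀ) C₁ D₁) v :=
    fun v => rfl
  obtain ⟨c0, hc0, hc0'⟩ := cc_coercive D₀ hD₀
  obtain ⟨c1, hc1, hc1'⟩ := cc_coercive D₁ hD₁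
  set c := min c0 c1 with hc
  have hcpos : 0 < c := lt_min hc0 hc1
  have hPn : ∀ v, ‖P v‖ ^ 2 = (v.ofLp ∘ Sum.inr) ⬝ᵥ (v.ofLp ∘ Sum.inr) := fun v => cc_normP v
  have hyy : ∀ y : Fin k' → ℝ, 0 ≤ y ⬝ᵥ y := fun y =>
    Finset.sum_nonneg fun i _ => mul_self_nonneg _
  have hdis : ∀ i v, inner ℝ v (B i v) ≤ -(c * ‖P v‖ ^ 2) := by
    intro i v
    rw [hPn]
    have hy := hyy (v.ofLp ∘ Sum.inr)
    fin_cases i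
    · change inner ℝ v (B 0 v) ≤ _
      rw [B0, cc_inner]
      refine (hc0' _).trans (neg_le_neg ?_)
      gcongr
      exact min_le_left _ _
    · change inner ℝ v (B 1 v) ≤ _
      rw [B1, cc_inner]
      refine (hc1' _).trans (neg_le_neg ?_)
      gcongr
      exact min_le_right _ _
  constructor
  · intro hG l hl x hx
    by_contra hx0
    set e : EuclideanSpace ℝ (Fin k ⊕ Fin k') := WithLp.toLp 2 (Sum.elim x 0) with he
    have he0 : e ≠ 0 := by
      intro h
      apply hx0
      funext i
      have := congrArg (fun w : EuclideanSpace ℝ (Fin k ⊕ Fin k') => w.ofLp (Sum.inl i)) h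
      simpa [he] using this
    have hz : (1 - l) • B 0 e + l • B 1 e = 0 := by
      rw [B0, B1]
      apply WithLp.ofLp_injective
      rw [WithLp.ofLp_add, WithLp.ofLp_smul, WithLp.ofLp_smul, cc_apply, cc_apply]
      rw [Matrix.add_mulVec, Matrix.smul_mulVec, Matrix.smul_mulVec] at hx
      funext j
      rcases j with j | j
      · simp [he]
      · have := congrFun hx j
        simpa [he] using this
    obtain ⟨u, hu, Φ, hΦ, hsol, hnot⟩ := sw_unstable B (fun i v => (hdis i v).trans (by
      have : 0 ≤ c * ‖P v‖ ^ 2 := by positivity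
      linarith)) e he0 l hl hz
    exact hnot (hG u hu e Φ hΦ hsol)
  · intro hinj u hu X Φ hΦ hsol
    have hQ0 : ∀ i v, B i v - P (B i v) = B i (P v) - P (B i (P v)) := by
      intro i v
      have key : ∀ (C : Matrix (Fin k') (Fin k) ℝ) (D : Matrix (Fin k') (Fin k') ℝ),
          ∀ A : EuclideanSpace ℝ (Fin k ⊕ Fin k') →L[ℝ] EuclideanSpace ℝ (Fin k ⊕ Fin k'),
          (∀ w, A w = Matrix.toEuclideanLin (Matrix.fromBlocks 0 (-Cᵀ) C D) w) →
          A v - P (A v) = A (P v) - P (A (P v)) := by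
        intro C D A hA
        have hPa : ∀ w, (P w).ofLp = Sum.elim (0 : Fin k → ℝ) (w.ofLp ∘ Sum.inr) := fun w => cc_P w
        apply WithLp.ofLp_injective
        rw [WithLp.ofLp_sub, WithLp.ofLp_sub, hPa, hPa, hA, hA, cc_apply, cc_apply, hPa]
        funext j
        rcases j with j | j
        · simp
        · simp
      fin_cases i
      · exact key C₀ D₀ (B 0) B0
      · exact key C₁ D₁ (B 1) B1
    set Q := ContinuousLinearMap.id ℝ (EuclideanSpace ℝ (Fin k ⊕ Fin k')) - P with hQdef
    refine sw_stable B P c (‖Q.comp (B 0)‖ + ‖Q.comp (B 1)‖) hcpos (by positivity) hdis ?_ ?_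
      u hu Φ hΦ X hsol
    · intro i v
      rw [hQ0]
      have h1 := (Q.comp (B i)).le_opNorm (P v)
      have h2 : Q.comp (B i) (P v) = B i (P v) - P (B i (P v)) := by simp [hQdef]
      rw [h2] at h1
      refine h1.trans ?_
      gcongr
      have n0 := norm_nonneg (Q.comp (B 0))
      have n1 := norm_nonneg (Q.comp (B 1))
      fin_cases i
      · change ‖Q.comp (B 0)‖ ≤ _
        linarith
      · change ‖Q.comp (B 1)‖ ≤ _
        linarith
    · intro l hl v hv
      have hv' : (1 - l) • B 0 v + l • B 1 v = 0 := by
        rw [← hv]; module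
      have hin : (1 - l) * inner ℝ v (B 0 v) + l * inner ℝ v (B 1 v) = 0 := by
        have := congrArg (fun w => inner ℝ v w) hv'
        simpa [inner_add_right, inner_smul_right] using this
      have hPv : ‖P v‖ ^ 2 = 0 := by
        have h0 := hdis 0 v
        have h1 := hdis 1 v
        have hl1 : 0 ≤ 1 - l := sub_nonneg.2 hl.2
        have k0 := mul_le_mul_of_nonneg_left h0 hl1
        have k1 := mul_le_mul_of_nonneg_left h1 hl.1
        have : c * ‖P v‖ ^ 2 ≤ 0 := by linarith
        have h3 : ‖P v‖ ^ 2 ≤ 0 := by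
          by_contra! hcon
          have := mul_pos hcpos hcon
          linarith
        exact le_antisymm h3 (by positivity)
      have hy0 : v.ofLp ∘ Sum.inr = 0 := by
        rw [hPn] at hPv
        exact dotProduct_self_eq_zero.1 hPv
      have hx0 : v.ofLp ∘ Sum.inl = 0 := by
        refine hinj l hl _ ?_
        have h := congrArg WithLp.ofLp hv'
        rw [B0, B1, WithLp.ofLp_add, WithLp.ofLp_smul, WithLp.ofLp_smul, cc_apply, cc_apply,
          hy0] at h
        rw [Matrix.add_mulVec, Matrix.smul_mulVec, Matrix.smul_mulVec]
        funext j
        have := congrFun h (Sum.inr j)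
        simpa using this
      apply WithLp.ofLp_injective
      funext j
      rcases j with j | j
      · exact congrFun hx0 j
      · exact congrFun hy0 j

end
end

section
/- Let a, b ∈ ℝ and d₀, d₁ > 0, and consider the 3×3 real matrices B₀ = [[0, a, −1],[−a, 0, 0],[1, 0, −d₀]] and B₁ = [[0, b, 0],[−b, 0, −1],[0, 1, −d₁]]. Then the switched system defined by {B₀, B₁} is GUAS if and only if ab > 0. -/
open Matrix MeasureTheory

noncomputable section

abbrev E3 := EuclideanSpace ℝ (Fin 3)

lemma sys_integrable (L : Fin 2 → E3 →L[ℝ] E3) (u : ℝ → Fin 2) (hu : Measurable u)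
    (Φ : ℝ → E3) (hΦ : Continuous Φ) (a b : ℝ) :
    IntervalIntegrable (fun s => L (u s) (Φ s)) volume a b := by
  have hm : Measurable (fun s => L (u s) (Φ s)) := by
    have : (fun s => L (u s) (Φ s)) = fun s => if u s = 0 then L 0 (Φ s) else L 1 (Φ s) := by
      funext s
      rcases Fin.exists_fin_two.mp ⟨u s, rfl⟩ with h | h <;> simp [h]
    rw [this]
    refine Measurable.ite (hu (measurableSet_singleton 0)) ?_ ?_
    · exact ((L 0).continuous.comp hΦ).measurable
    · exact ((L 1).continuous.comp hΦ).measurable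
  have hc : Continuous (fun s => (‖L 0‖ + ‖L 1‖) * ‖Φ s‖) := by fun_prop
  refine (hc.intervalIntegrable a b).mono_fun hm.aestronglyMeasurable ?_
  refine Filter.Eventually.of_forall fun s => ?_
  have h1 : ‖L (u s)‖ ≤ ‖L 0‖ + ‖L 1‖ := by
    rcases Fin.exists_fin_two.mp ⟨u s, rfl⟩ with h | h <;> simp [← h]
  calc ‖L (u s) (Φ s)‖ ≤ ‖L (u s)‖ * ‖Φ s‖ := (L (u s)).le_opNorm _
    _ ≤ (‖L 0‖ + ‖L 1‖) * ‖Φ s‖ := by gcongr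
    _ ≤ _ := le_abs_self _

lemma sys_growth (L : Fin 2 → E3 →L[ℝ] E3) (u : ℝ → Fin 2) (hu : Measurable u)
    (Φ : ℝ → E3) (hΦ : Continuous Φ) (X : E3)
    (h : ∀ t : ℝ, 0 ≤ t → Φ t = X + ∫ s in (0:ℝ)..t, L (u s) (Φ s))
    (H : E3 → ℝ) (hH : ContDiff ℝ 1 H) (DH : E3 → E3 → ℝ)
    (hD : ∀ (γ : ℝ → E3) (t : ℝ) (v : E3), HasDerivAt γ v t →
      HasDerivAt (fun s => H (γ s)) (DH (γ t) v) t)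
    (ε : ℝ) (hε : ∀ t, 0 ≤ t → ∀ i, ε ≤ DH (Φ t) (L i (Φ t)))
    (s t : ℝ) (hs : 0 ≤ s) (hst : s ≤ t) : H (Φ s) + ε * (t - s) ≤ H (Φ t) := by
  have hI := sys_integrable L u hu Φ hΦ
  obtain ⟨R, hR⟩ := (isCompact_Icc (a := s) (b := t)).exists_bound_of_continuousOn hΦ.continuousOn
  have hlip : LipschitzOnWith (Real.toNNReal ((‖L 0‖ + ‖L 1‖) * R)) Φ (Set.Icc s t) := by
    apply LipschitzOnWith.of_dist_le'
    intro p hp q hq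
    have : Φ p - Φ q = ∫ s in q..p, L (u s) (Φ s) := by
      rw [h p (hs.trans hp.1), h q (hs.trans hq.1), add_sub_add_left_eq_sub,
        intervalIntegral.integral_interval_sub_left (hI _ _) (hI _ _)]
    rw [dist_eq_norm, this, Real.dist_eq]
    apply intervalIntegral.norm_integral_le_of_norm_le_const
    intro x hx
    have hx' : x ∈ Set.Icc s t := by
      have := Set.uIoc_subset_uIcc hx
      exact (Set.uIcc_subset_Icc hq hp) this
    have h1 : ‖L (u x)‖ ≤ ‖L 0‖ + ‖L 1‖ := by
      rcases Fin.exists_fin_two.mp ⟨u x, rfl⟩ with h | h <;> simp [← h]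
    calc ‖L (u x) (Φ x)‖ ≤ ‖L (u x)‖ * ‖Φ x‖ := (L (u x)).le_opNorm _
      _ ≤ (‖L 0‖ + ‖L 1‖) * R := by
        gcongr
        exact hR x hx'
  obtain ⟨K, hK⟩ := hH.contDiffOn.exists_lipschitzOnWith (s := Metric.closedBall (0:E3) R) (by simp)
    (convex_closedBall _ _) (isCompact_closedBall _ _)
  have hcomp : LipschitzOnWith (K * _) (H ∘ Φ) (Set.Icc s t) :=
    hK.comp hlip (fun x hx => by simpa using hR x hx)
  rw [← Set.uIcc_of_le hst] at hcomp
  have hac := hcomp.absolutelyContinuousOnInterval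
  have hder : ∀ᵐ x ∂(volume.restrict (Set.Icc s t)), ε ≤ deriv (H ∘ Φ) x := by
    rw [ae_restrict_iff' measurableSet_Icc]
    have h0 : ∀ᵐ x : ℝ, x ≠ 0 := by
      simp [ae_iff]
    filter_upwards [(hI 0 (t+1)).ae_hasDerivAt_integral, h0] with x hx hx0 hxm
    have hx1 : 0 < x := lt_of_le_of_ne (hs.trans hxm.1) hx0.symm
    have hd := hx (Set.Icc_subset_uIcc ⟨hx1.le, by linarith [hxm.2]⟩) 0 (Set.left_mem_uIcc)
    have hd2 : HasDerivAt Φ (L (u x) (Φ x)) x := by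
      refine (hd.const_add X).congr_of_eventuallyEq ?_
      filter_upwards [Ioi_mem_nhds hx1] with y hy
      exact h y (le_of_lt hy)
    have := (hD Φ x _ hd2).deriv
    change _ ≤ deriv (fun s => H (Φ s)) x
    rw [this]
    exact hε x hx1.le _
  have hint := hac.integral_deriv_eq_sub
  have := intervalIntegral.integral_mono_ae_restrict (f := fun _ => ε) hst (by simp) hac.intervalIntegrable_deriv hder
  rw [hint] at this
  simp at this
  linarith [mul_comm ε (t-s)]

lemma quad_absorb (e M d : ℝ) (he : 0 < e) (hd : 0 < d) (C : ℝ) (hC : M^2/(4*d*e) ≤ C)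
   (z F : ℝ) (hF : |F| ≤ M) : e / 2 ≤ e + z * F + 2 * C * d * z^2 := by
  have h1 : M^2 ≤ C * (4*d*e) := by rwa [div_le_iff₀ (by positivity)] at hC
  have h2 : F^2 ≤ M^2 := sq_le_sq' (by linarith [abs_le.mp hF]) (abs_le.mp hF).2
  have h3 : 0 ≤ (e + z*F)^2 := sq_nonneg _
  have h4 : z^2*F^2 ≤ z^2 * (C * (4*d*e)) := by gcongr; linarith
  have : 0 ≤ e * (e/2 + z * F + 2 * C * d * z^2) := by nlinarith
  have := nonneg_of_mul_nonneg_right this he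
  linarith

def HH (a b N C : ℝ) (v : E3) : ℝ :=
  a * (N * ((v 1 ^ 2 - v 0 ^ 2) / 2 + 2 * v 2 * (b * v 0 + a * v 1))
    + (v 0 * v 1) * ((v 1 ^ 2 - v 0 ^ 2) / 2)) - C * (v 0 ^ 2 + v 1 ^ 2 + v 2 ^ 2)

def DHH (a b N C : ℝ) (v w : E3) : ℝ :=
  a * (N * ((v 1 * w 1 - v 0 * w 0) + 2 * w 2 * (b * v 0 + a * v 1)
      + 2 * v 2 * (b * w 0 + a * w 1))
    + (w 0 * v 1 + v 0 * w 1) * ((v 1 ^ 2 - v 0 ^ 2) / 2)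
    + (v 0 * v 1) * (v 1 * w 1 - v 0 * w 0)) - 2 * C * (v 0 * w 0 + v 1 * w 1 + v 2 * w 2)

lemma HH_contDiff (a b N C : ℝ) : ContDiff ℝ 1 (HH a b N C) := by
  unfold HH; fun_prop

lemma HH_deriv (a b N C : ℝ) (γ : ℝ → E3) (t : ℝ) (v : E3) (h : HasDerivAt γ v t) :
    HasDerivAt (fun s => HH a b N C (γ s)) (DHH a b N C (γ t) v) t := by
  have hc : ∀ i, HasDerivAt (fun s => γ s i) (v i) t := fun i => by
    exact ((EuclideanSpace.proj (𝕜 := ℝ) i).hasFDerivAt.comp_hasDerivAt t h)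
  have h0 := hc 0
  have h1 := hc 1
  have h2 := hc 2
  unfold HH DHH
  have q := (((h1.pow 2).sub (h0.pow 2)).div_const 2)
  have := ((((q.add ((h2.const_mul 2).mul ((h0.const_mul b).add (h1.const_mul a)))).const_mul N).add
    ((h0.mul h1).mul q)).const_mul a).sub ((((h0.pow 2).add (h1.pow 2)).add (h2.pow 2)).const_mul C)
  refine this.congr_deriv ?_
  simp
  ring

lemma euc_norm_sq (x : E3) : ‖x‖ ^ 2 = x 0 ^ 2 + x 1 ^ 2 + x 2 ^ 2 := by
  rw [EuclideanSpace.norm_sq_eq]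
  simp [Fin.sum_univ_three]

def LL (a b d₀ d₁ : ℝ) (i : Fin 2) : E3 →L[ℝ] E3 :=
  LinearMap.toContinuousLinearMap (Matrix.toEuclideanLin (![!![0, a, -1; -a, 0, 0; 1, 0, -d₀],
    !![0, b, 0; -b, 0, -1; 0, 1, -d₁]] i))

lemma LL00 (a b d₀ d₁ : ℝ) (x : E3) : LL a b d₀ d₁ 0 x 0 = a * x 1 - x 2 := by
  simp [LL, Matrix.toLpLin_apply, dotProduct, Fin.sum_univ_three]; ring
lemma LL01 (a b d₀ d₁ : ℝ) (x : E3) : LL a b d₀ d₁ 0 x 1 = - a * x 0 := by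
  simp [LL, Matrix.toLpLin_apply, dotProduct, Fin.sum_univ_three]
lemma LL02 (a b d₀ d₁ : ℝ) (x : E3) : LL a b d₀ d₁ 0 x 2 = x 0 - d₀ * x 2 := by
  simp [LL, Matrix.toLpLin_apply, dotProduct, Fin.sum_univ_three]; ring
lemma LL10 (a b d₀ d₁ : ℝ) (x : E3) : LL a b d₀ d₁ 1 x 0 = b * x 1 := by
  simp [LL, Matrix.toLpLin_apply, dotProduct, Fin.sum_univ_three]
lemma LL11 (a b d₀ d₁ : ℝ) (x : E3) : LL a b d₀ d₁ 1 x 1 = - b * x 0 - x 2 := by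
  simp [LL, Matrix.toLpLin_apply, dotProduct, Fin.sum_univ_three]; ring
lemma LL12 (a b d₀ d₁ : ℝ) (x : E3) : LL a b d₀ d₁ 1 x 2 = x 1 - d₁ * x 2 := by
  simp [LL, Matrix.toLpLin_apply, dotProduct, Fin.sum_univ_three]; ring

def F0 (a b N d : ℝ) (v : E3) : ℝ :=
  a * N * (v 0 - 2 * d * (b * v 0 + a * v 1) + 2 * a * b * v 1 - 2 * b * v 2 - 2 * a ^ 2 * v 0)
  + a * (- v 1 * ((v 1 ^ 2 - v 0 ^ 2) / 2) + v 0 * v 1 * v 0)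
  + 2 * a ^ 2 * (- (v 0 ^ 2 + v 1 ^ 2 + v 2 ^ 2) * v 2 / 2 + v 2 ^ 3 / 4)

def F1 (a b N d : ℝ) (v : E3) : ℝ :=
  a * N * (- v 1 - 2 * d * (b * v 0 + a * v 1) + 2 * b ^ 2 * v 1 - 2 * a * v 2 - 2 * a * b * v 0)
  + a * (- v 0 * ((v 1 ^ 2 - v 0 ^ 2) / 2) - v 0 * v 1 * v 1)
  + 2 * a * b * (- (v 0 ^ 2 + v 1 ^ 2 + v 2 ^ 2) * v 2 / 2 + v 2 ^ 3 / 4)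

lemma DHH_0 (a b d₀ d₁ N C : ℝ) (v : E3) : DHH a b N C v (LL a b d₀ d₁ 0 v) =
    2 * (a * b) * N * v 0 ^ 2 + 2 * a ^ 2 * ((v 0 ^ 2 + v 1 ^ 2 + v 2 ^ 2)^2 / 4
      - 2 * v 0 ^ 2 * v 1 ^ 2) + v 2 * F0 a b N d₀ v + 2 * C * d₀ * v 2 ^ 2 := by
  unfold DHH F0
  rw [LL00, LL01, LL02]; ring

lemma DHH_1 (a b d₀ d₁ N C : ℝ) (v : E3) : DHH a b N C v (LL a b d₀ d₁ 1 v) =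
    2 * a ^ 2 * N * v 1 ^ 2 + 2 * (a * b) * ((v 0 ^ 2 + v 1 ^ 2 + v 2 ^ 2)^2 / 4
      - 2 * v 0 ^ 2 * v 1 ^ 2) + v 2 * F1 a b N d₁ v + 2 * C * d₁ * v 2 ^ 2 := by
  unfold DHH F1
  rw [LL10, LL11, LL12]; ring

lemma guas_of_pos (a b d₀ d₁ : ℝ) (hd₀ : 0 < d₀) (hd₁ : 0 < d₁) (hab : 0 < a * b)
    (u : ℝ → Fin 2) (hu : Measurable u)
    (Φ : ℝ → E3) (hΦ : Continuous Φ) (X : E3)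
    (h : ∀ t : ℝ, 0 ≤ t → Φ t = X + ∫ s in (0:ℝ)..t, LL a b d₀ d₁ (u s) (Φ s)) :
    Filter.Tendsto Φ Filter.atTop (nhds 0) := by
  have ha : 0 < a ^ 2 := by
    have : a ≠ 0 := by rintro rfl; simp at hab
    positivity
  -- norm is antitone
  have hanti : ∀ s t, 0 ≤ s → s ≤ t → ‖Φ t‖ ^ 2 ≤ ‖Φ s‖ ^ 2 := by
    intro s t hs hst
    have := sys_growth _ u hu Φ hΦ X h (HH 0 0 0 1) (HH_contDiff _ _ _ _) (DHH 0 0 0 1)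
      (HH_deriv _ _ _ _) 0 (by
        intro t _ i
        fin_cases i
        · simp only [DHH, Fin.zero_eta]
          rw [LL00, LL01, LL02]
          have : 0 ≤ 2 * d₀ * Φ t 2 ^ 2 := by positivity
          linarith
        · simp only [DHH, Fin.mk_one]
          rw [LL10, LL11, LL12]
          have : 0 ≤ 2 * d₁ * Φ t 2 ^ 2 := by positivity
          linarith) s t hs hst
    rw [euc_norm_sq, euc_norm_sq]
    simp only [HH] at this
    linarith
  by_contra hcon
  have hrho : ∃ ρ > 0, ∀ t, 0 ≤ t → ρ ≤ ‖Φ t‖ ^ 2 := by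
    by_contra! hc
    apply hcon
    rw [Metric.tendsto_atTop]
    intro e he
    obtain ⟨t, ht, ht2⟩ := hc (e ^ 2) (by positivity)
    refine ⟨t, fun n hn => ?_⟩
    rw [dist_zero_right]
    have := hanti t n ht hn
    exact lt_of_pow_lt_pow_left₀ 2 he.le (by linarith)
  obtain ⟨ρ, hρ, hρ2⟩ := hrho
  set R := ‖Φ 0‖ with hRdef
  have hR0 : 0 ≤ R := norm_nonneg _
  have hR : ∀ t, 0 ≤ t → ‖Φ t‖ ^ 2 ≤ R ^ 2 := fun t ht => hanti 0 t le_rfl ht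
  have hball : ∀ t, 0 ≤ t → Φ t ∈ Metric.closedBall (0:E3) R := by
    intro t ht
    simpa using (pow_le_pow_iff_left₀ (norm_nonneg _) hR0 two_ne_zero).mp (hR t ht)
  obtain ⟨N, hN0, hN1, hN2⟩ : ∃ N : ℝ, 0 ≤ N ∧ 2 * a ^ 2 * R ^ 2 ≤ (a * b) * N ∧
      2 * (a * b) * R ^ 2 ≤ a ^ 2 * N := by
    refine ⟨2 * a ^ 2 * R ^ 2 / (a * b) + 2 * (a * b) * R ^ 2 / a ^ 2, by positivity, ?_, ?_⟩
    · rw [mul_add, mul_div_cancel₀ _ hab.ne']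
      have : 0 ≤ (a * b) * (2 * (a * b) * R ^ 2 / a ^ 2) := by positivity
      linarith
    · rw [mul_add, mul_div_cancel₀ (2 * (a * b) * R ^ 2) ha.ne']
      have : 0 ≤ a ^ 2 * (2 * a ^ 2 * R ^ 2 / (a * b)) := by positivity
      linarith
  obtain ⟨M0, hM0⟩ := (isCompact_closedBall (0:E3) R).exists_bound_of_continuousOn
    (f := F0 a b N d₀) (by unfold F0; fun_prop)
  obtain ⟨M1, hM1⟩ := (isCompact_closedBall (0:E3) R).exists_bound_of_continuousOn
    (f := F1 a b N d₁) (by unfold F1; fun_prop)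
  set e0 := a ^ 2 * ρ ^ 2 / 2 with he0
  set e1 := a * b * ρ ^ 2 / 2 with he1
  have he0p : 0 < e0 := by positivity
  have he1p : 0 < e1 := by positivity
  set C := max (M0^2/(4*d₀*e0)) (M1^2/(4*d₁*e1)) with hC
  obtain ⟨M, hM⟩ := (isCompact_closedBall (0:E3) R).exists_bound_of_continuousOn
    (f := HH a b N C) (HH_contDiff a b N C).continuous.continuousOn
  set ε := min (e0/2) (e1/2) with hε
  have hεp : 0 < ε := by positivity
  have key : ∀ t, 0 ≤ t → HH a b N C (Φ 0) + ε * (t - 0) ≤ HH a b N C (Φ t) := by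
    intro t ht
    refine sys_growth _ u hu Φ hΦ X h (HH a b N C) (HH_contDiff _ _ _ _) (DHH a b N C)
      (HH_deriv _ _ _ _) ε ?_ 0 t le_rfl ht
    intro t ht i
    have hn1 := hρ2 t ht
    have hn2 := hR t ht
    have hb := hball t ht
    generalize Φ t = v at *
    rw [euc_norm_sq] at hn1 hn2
    have hsq : ρ ^ 2 ≤ (v 0 ^ 2 + v 1 ^ 2 + v 2 ^ 2) ^ 2 := by gcongr
    have hy : v 1 ^ 2 ≤ R ^ 2 := by nlinarith [sq_nonneg (v 0), sq_nonneg (v 2)]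
    have hx : v 0 ^ 2 ≤ R ^ 2 := by nlinarith [sq_nonneg (v 1), sq_nonneg (v 2)]
    fin_cases i
    · simp only [Fin.zero_eta]
      rw [DHH_0]
      have h1 := quad_absorb e0 M0 d₀ he0p hd₀ C (le_max_left _ _) (v 2) (F0 a b N d₀ v)
        (hM0 v hb)
      have h2 : 2 * a ^ 2 * R ^ 2 * v 0 ^ 2 ≤ (a * b) * N * v 0 ^ 2 := by gcongr
      have h3 : a ^ 2 * (v 0 ^ 2 * v 1 ^ 2) ≤ a ^ 2 * (v 0 ^ 2 * R ^ 2) := by gcongr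
      have h4 : a ^ 2 * ρ ^ 2 ≤ a ^ 2 * (v 0 ^ 2 + v 1 ^ 2 + v 2 ^ 2) ^ 2 := by gcongr
      have h5 : ε ≤ e0 / 2 := min_le_left _ _
      linarith
    · simp only [Fin.mk_one]
      rw [DHH_1]
      have h1 := quad_absorb e1 M1 d₁ he1p hd₁ C (le_max_right _ _) (v 2) (F1 a b N d₁ v)
        (hM1 v hb)
      have h2 : 2 * (a * b) * R ^ 2 * v 1 ^ 2 ≤ a ^ 2 * N * v 1 ^ 2 := by gcongr
      have h3 : (a * b) * (v 0 ^ 2 * v 1 ^ 2) ≤ (a * b) * (R ^ 2 * v 1 ^ 2) := by gcongr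
      have h4 : (a * b) * ρ ^ 2 ≤ (a * b) * (v 0 ^ 2 + v 1 ^ 2 + v 2 ^ 2) ^ 2 := by gcongr
      have h5 : ε ≤ e1 / 2 := min_le_right _ _
      linarith
  have hMp : 0 ≤ M := (norm_nonneg _).trans (hM _ (hball 0 le_rfl))
  have ht : 0 ≤ (2 * M + 1) / ε := by positivity
  have h1 := key _ ht
  have h2 := abs_le.mp (hM _ (hball 0 le_rfl))
  have h3 := abs_le.mp (hM _ (hball _ ht))
  rw [sub_zero, mul_div_cancel₀ _ hεp.ne'] at h1
  linarith

lemma ex0 (A : E3 →L[ℝ] E3) (x : E3) : NormedSpace.exp ((0:ℝ) • A) x = x := by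
  have h : ((0:ℝ) • A) = 0 := zero_smul ℝ A
  rw [h, NormedSpace.exp_zero]
  rfl

lemma ex_deriv (A : E3 →L[ℝ] E3) (x : E3) (t : ℝ) :
    HasDerivAt (fun t : ℝ => NormedSpace.exp (t • A) x) (A (NormedSpace.exp (t • A) x)) t := by
  have := (hasDerivAt_exp_smul_const' (𝕂 := ℝ) A t).clm_apply (hasDerivAt_const t x)
  simpa using this

lemma ex_deriv' (A : E3 →L[ℝ] E3) (x : E3) (t : ℝ) :
    HasDerivAt (fun t : ℝ => NormedSpace.exp (t • A) x) (NormedSpace.exp (t • A) (A x)) t := by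
  have := (hasDerivAt_exp_smul_const (𝕂 := ℝ) A t).clm_apply (hasDerivAt_const t x)
  simpa using this

lemma ex_contr (A : E3 →L[ℝ] E3) (hA : ∀ y, inner ℝ y (A y) ≤ 0) (x : E3) (t : ℝ) (ht : 0 ≤ t) :
    ‖NormedSpace.exp (t • A) x‖ ≤ ‖x‖ := by
  have h1 : ∀ t, HasDerivAt (fun t : ℝ => ‖NormedSpace.exp (t • A) x‖ ^ 2)
      (2 * inner ℝ (NormedSpace.exp (t • A) x) (A (NormedSpace.exp (t • A) x))) t :=
    fun t => (ex_deriv A x t).norm_sq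
  have h2 : Antitone (fun t : ℝ => ‖NormedSpace.exp (t • A) x‖ ^ 2) := by
    apply antitone_of_deriv_nonpos (fun t => (h1 t).differentiableAt)
    intro t
    rw [(h1 t).deriv]
    linarith [hA (NormedSpace.exp (t • A) x)]
  have h3 := h2 ht
  simp only [ex0] at h3
  exact (pow_le_pow_iff_left₀ (norm_nonneg _) (norm_nonneg _) two_ne_zero).mp h3

lemma ex_first (A : E3 →L[ℝ] E3) (hA : ∀ y, inner ℝ y (A y) ≤ 0) (x : E3) (t : ℝ) (ht : 0 ≤ t) :
    ‖NormedSpace.exp (t • A) x - x‖ ≤ t * ‖A x‖ := by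
  have := norm_image_sub_le_of_norm_deriv_le_segment' (a := 0) (b := t)
    (f := fun t : ℝ => NormedSpace.exp (t • A) x) (C := ‖A x‖)
    (fun s _ => (ex_deriv' A x s).hasDerivWithinAt)
    (fun s hs => ex_contr A hA _ s hs.1) t ⟨ht, le_rfl⟩
  simpa [ex0, mul_comm] using this

lemma ex_second (A : E3 →L[ℝ] E3) (hA : ∀ y, inner ℝ y (A y) ≤ 0) (x : E3) (t : ℝ) (ht : 0 ≤ t) :
    ‖NormedSpace.exp (t • A) x - x - t • A x‖ ≤ t ^ 2 * ‖A (A x)‖ := by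
  have := norm_image_sub_le_of_norm_deriv_le_segment' (a := 0) (b := t)
    (f := fun t : ℝ => NormedSpace.exp (t • A) x - x - t • A x) (C := t * ‖A (A x)‖)
    (fun s _ => (((ex_deriv' A x s).sub_const x).sub
      ((hasDerivAt_id s).smul_const (A x))).hasDerivWithinAt)
    (fun s hs => by
      rw [one_smul]
      refine (ex_first A hA (A x) s hs.1).trans ?_
      gcongr
      exact hs.2.le) t ⟨ht, le_rfl⟩
  simp only [ex0, zero_smul, sub_self, sub_zero] at this
  linarith

def xs (A : ℕ → E3 →L[ℝ] E3) (τ : ℕ → ℝ) (v : E3) : ℕ → E3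
  | 0 => v
  | n + 1 => NormedSpace.exp (τ n • A n) (xs A τ v n)

lemma glue (L : Fin 2 → E3 →L[ℝ] E3) (i : ℕ → Fin 2) (T : ℕ → ℝ) (hT0 : T 0 = 0)
    (hT : StrictMono T) (hTt : Filter.Tendsto T Filter.atTop Filter.atTop) (v : E3) :
    ∃ (u : ℝ → Fin 2) (Φ : ℝ → E3), Measurable u ∧ Continuous Φ ∧
      (∀ t : ℝ, 0 ≤ t → Φ t = v + ∫ s in (0:ℝ)..t, L (u s) (Φ s)) ∧
      ∀ n, Φ (T n) = xs (fun n => L (i n)) (fun n => T (n+1) - T n) v n := by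
  classical
  set x := xs (fun n => L (i n)) (fun n => T (n+1) - T n) v with hx
  have hex : ∀ t : ℝ, ∃ n, t < T (n + 1) := fun t => by
    obtain ⟨n, hn⟩ := ((hTt.comp (Filter.tendsto_add_atTop_nat 1)).eventually_gt_atTop t).exists
    exact ⟨n, hn⟩
  set N : ℝ → ℕ := fun t => Nat.find (hex t) with hN
  have hN1 : ∀ t, t < T (N t + 1) := fun t => Nat.find_spec (hex t)
  have hNle : ∀ t n, t < T (n + 1) → N t ≤ n := fun t n h => Nat.find_min' (hex t) h
  have hNmono : Monotone N := fun s t hst => hNle s _ (hst.trans_lt (hN1 t))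
  have hNge : ∀ t k, N t = k + 1 → T (k + 1) ≤ t := by
    intro t k h
    by_contra hc
    have := hNle t k (not_le.mp hc)
    omega
  have hN3 : ∀ t n, T n ≤ t → t < T (n + 1) → N t = n := by
    intro t n h1 h2
    have := hT.lt_iff_lt.mp (h1.trans_lt (hN1 t))
    have := hNle t n h2
    omega
  set ψ : ℕ → ℝ → E3 := fun n t => NormedSpace.exp ((t - T n) • L (i n)) (x n) with hψ
  have hψd : ∀ n t, HasDerivAt (ψ n) (L (i n) (ψ n t)) t := by
    intro n t
    have := HasDerivAt.scomp (h := fun t => t - T n) t (ex_deriv (L (i n)) (x n) (t - T n))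
      ((hasDerivAt_id t).sub_const (T n))
    rw [one_smul] at this
    exact this
  have hψT : ∀ n, ψ n (T n) = x n := by
    intro n; simp only [hψ, sub_self]; exact ex0 _ _
  have hψT' : ∀ n, ψ n (T (n+1)) = x (n+1) := fun n => rfl
  set Φ : ℝ → E3 := fun t => ψ (N t) t with hΦ
  have hright : ∀ t, Φ =ᶠ[nhdsWithin t (Set.Ici t)] ψ (N t) := by
    intro t
    filter_upwards [self_mem_nhdsWithin, mem_nhdsWithin_of_mem_nhds (Iio_mem_nhds (hN1 t))]
      with s hs1 hs2
    have : N s = N t := le_antisymm (hNle s _ hs2) (hNmono hs1)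
    simp only [hΦ, this]
  have hcont : Continuous Φ := by
    rw [continuous_iff_continuousAt]
    intro t
    rw [continuousAt_iff_continuous_left_right]
    constructor
    · have : ∃ m, Φ =ᶠ[nhdsWithin t (Set.Iic t)] ψ m := by
        rcases hk : N t with _ | k
        · refine ⟨0, ?_⟩
          filter_upwards [self_mem_nhdsWithin] with s hs
          have : N s = 0 := by have := hNmono hs; omega
          simp only [hΦ, this]
        · rcases (hNge t k hk).lt_or_eq with hlt | heq
          · refine ⟨k + 1, ?_⟩
            filter_upwards [self_mem_nhdsWithin, mem_nhdsWithin_of_mem_nhds (Ioi_mem_nhds hlt)]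
              with s hs1 hs2
            have : N s = k + 1 := hN3 s _ (le_of_lt hs2) (hs1.trans_lt (hk ▸ hN1 t))
            simp only [hΦ, this]
          · refine ⟨k, ?_⟩
            have : T k < t := heq ▸ hT (Nat.lt_succ_self k)
            filter_upwards [self_mem_nhdsWithin, mem_nhdsWithin_of_mem_nhds (Ioi_mem_nhds this)]
              with s hs1 hs2
            rcases (show s ≤ t from hs1).lt_or_eq with h1 | h1
            · have : N s = k := hN3 s _ (le_of_lt hs2) (heq ▸ h1)
              simp only [hΦ, this]
            · subst h1
              simp only [hΦ, hk]
              rw [← heq, hψT, hψT']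
      obtain ⟨m, hm⟩ := this
      exact (hψd m t).continuousAt.continuousWithinAt.congr_of_eventuallyEq hm
        (hm.eq_of_nhdsWithin (Set.mem_Iic.mpr le_rfl))
    · exact (hψd _ t).continuousAt.continuousWithinAt.congr_of_eventuallyEq (hright t) rfl
  set u : ℝ → Fin 2 := fun t => i (N t) with hu
  have hum : Measurable u := (measurable_from_nat (f := i)).comp hNmono.measurable
  have hNT : ∀ n, N (T n) = n := fun n => hN3 _ _ le_rfl (hT (Nat.lt_succ_self n))
  have hΦT : ∀ n, Φ (T n) = x n := by
    intro n
    simp only [hΦ, hNT, hψT]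
  refine ⟨u, Φ, hum, hcont, ?_, hΦT⟩
  intro t ht
  have := intervalIntegral.integral_eq_sub_of_hasDeriv_right (a := 0) (b := t) (f := Φ)
    (f' := fun s => L (u s) (Φ s)) hcont.continuousOn ?_ (sys_integrable L u hum Φ hcont 0 t)
  · rw [this, ← hT0, hΦT 0]
    simp [hx, xs]
  · intro s _
    have : HasDerivWithinAt Φ (L (u s) (Φ s)) (Set.Ici s) s :=
      (hψd (N s) s).hasDerivWithinAt.congr_of_eventuallyEq (hright s) rfl
    exact this.mono Set.Ioi_subset_Ici_self

lemma LL_diss (a b d₀ d₁ : ℝ) (hd₀ : 0 < d₀) (hd₁ : 0 < d₁) (i : Fin 2) (y : E3) :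
    inner ℝ y (LL a b d₀ d₁ i y) ≤ 0 := by
  rw [PiLp.inner_apply, Fin.sum_univ_three]
  fin_cases i
  · simp only [Fin.zero_eta, LL00, LL01, LL02, RCLike.inner_apply, conj_trivial]
    have : 0 ≤ d₀ * y 2 ^ 2 := by positivity
    linarith
  · simp only [Fin.mk_one, LL10, LL11, LL12, RCLike.inner_apply, conj_trivial]
    have : 0 ≤ d₁ * y 2 ^ 2 := by positivity
    linarith

lemma step_bound (A B : E3 →L[ℝ] E3) (hA : ∀ y, inner ℝ y (A y) ≤ 0)
    (hB : ∀ y, inner ℝ y (B y) ≤ 0) (l m : ℝ) (hl : 0 ≤ l) (hm : 0 ≤ m) (v : E3)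
    (hv : l • A v + m • B v = 0) (h : ℝ) (hh : 0 ≤ h) :
    ‖NormedSpace.exp ((m * h) • B) (NormedSpace.exp ((l * h) • A) v) - v‖ ≤
      (l ^ 2 * ‖A (A v)‖ + m * l * ‖B (A v)‖ + m ^ 2 * ‖B (B v)‖) * h ^ 2 := by
  have hlh : 0 ≤ l * h := by positivity
  have hmh : 0 ≤ m * h := by positivity
  have h1 := ex_second A hA v (l * h) hlh
  have h2 := ex_second B hB v (m * h) hmh
  have h3 := ex_first B hB ((l * h) • A v) (m * h) hmh
  have h4 := ex_contr B hB (NormedSpace.exp ((l * h) • A) v - v - (l * h) • A v) (m * h) hmh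
  generalize NormedSpace.exp ((m * h) • B) = P at *
  generalize NormedSpace.exp ((l * h) • A) v = w at *
  have hv' : (l * h) • A v + (m * h) • B v = 0 := by
    have : (l * h) • A v + (m * h) • B v = h • (l • A v + m • B v) := by module
    rw [this, hv, smul_zero]
  have e : P w - v = P (w - v - (l * h) • A v) + (P ((l * h) • A v) - (l * h) • A v)
      + (P v - v - (m * h) • B v) := by
    rw [map_sub, map_sub]
    have : P w - v = P w - v + ((l * h) • A v + (m * h) • B v) - ((l * h) • A v + (m * h) • B v) := by
      abel
    rw [this, hv']
    have : (m * h) • B v = - ((l * h) • A v) := by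
      rw [eq_neg_iff_add_eq_zero, add_comm]; exact hv'
    rw [this]
    abel
  have h5 : ‖B ((l * h) • A v)‖ = l * h * ‖B (A v)‖ := by
    rw [map_smul, norm_smul, Real.norm_of_nonneg hlh]
  rw [h5] at h3
  rw [e]
  refine (norm_add₃_le).trans ?_
  linarith [h4.trans h1]

lemma not_guas_of_neg (a b d₀ d₁ : ℝ) (hd₀ : 0 < d₀) (hd₁ : 0 < d₁) (hab : a * b < 0) :
    ∃ (u : ℝ → Fin 2) (Φ : ℝ → E3) (v : E3), Measurable u ∧ Continuous Φ ∧
      (∀ t : ℝ, 0 ≤ t → Φ t = v + ∫ s in (0:ℝ)..t, LL a b d₀ d₁ (u s) (Φ s)) ∧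
      ¬ Filter.Tendsto Φ Filter.atTop (nhds 0) := by
  have ha : a ≠ 0 := by rintro rfl; simp at hab
  have hb : b ≠ 0 := by rintro rfl; simp at hab
  set L := LL a b d₀ d₁ with hL
  have hdis := LL_diss a b d₀ d₁ hd₀ hd₁
  set l := |b| with hl
  set m := |a| with hm
  have hlp : 0 < l := abs_pos.mpr hb
  have hmp : 0 < m := abs_pos.mpr ha
  have hbal : l * a + m * b = 0 := by
    rcases mul_neg_iff.mp hab with ⟨h1, h2⟩ | ⟨h1, h2⟩
    · rw [hl, hm, abs_of_pos h1, abs_of_neg h2]; ring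
    · rw [hl, hm, abs_of_neg h1, abs_of_pos h2]; ring
  set v : E3 := !₂[m, -l, 0] with hv
  have hv0 : v 0 = m := by simp [hv]
  have hv1 : v 1 = -l := by simp [hv]
  have hv2 : v 2 = 0 := by simp [hv]
  have hvn : 0 < ‖v‖ := by
    rw [norm_pos_iff]
    intro h
    rw [h] at hv0
    simp at hv0
    exact hmp.ne hv0
  have hker : l • L 0 v + m • L 1 v = 0 := by
    ext i
    fin_cases i
    · simp only [Fin.zero_eta, PiLp.add_apply, PiLp.smul_apply, smul_eq_mul, PiLp.zero_apply, hL, LL00, LL10, hv0, hv1, hv2]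
      linear_combination (-l) * hbal
    · simp only [Fin.mk_one, PiLp.add_apply, PiLp.smul_apply, smul_eq_mul, PiLp.zero_apply, hL, LL01, LL11, hv0, hv1, hv2]
      linear_combination (-m) * hbal
    · simp only [Fin.reduceFinMk, PiLp.add_apply, PiLp.smul_apply, smul_eq_mul, PiLp.zero_apply, hL, LL02, LL12, hv0, hv1, hv2]
      ring
  set K := l ^ 2 * ‖L 0 (L 0 v)‖ + m * l * ‖L 1 (L 0 v)‖ + m ^ 2 * ‖L 1 (L 1 v)‖ with hK
  have hK0 : 0 ≤ K := by positivity
  have hstep := step_bound (L 0) (L 1) (hdis 0) (hdis 1) l m hlp.le hmp.le v hker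
  rw [← hK] at hstep
  have hsum : Summable (fun k : ℕ => (1 / ((k:ℝ) + 1)) ^ 2) := by
    have := (summable_nat_add_iff 1).mpr (Real.summable_one_div_nat_pow.mpr (one_lt_two))
    refine this.congr fun k => ?_
    push_cast
    rw [div_pow, one_pow]
  set S := ∑' k : ℕ, (1 / ((k:ℝ) + 1)) ^ 2 with hS
  have hS0 : 0 ≤ S := tsum_nonneg fun k => by positivity
  obtain ⟨δ, hδ, hδ2⟩ : ∃ δ > 0, K * δ ^ 2 * S ≤ ‖v‖ / 2 := by
    have hp : 0 < ‖v‖ / (2 * (K * S + 1)) := by positivity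
    refine ⟨min 1 (‖v‖ / (2 * (K * S + 1))), by positivity, ?_⟩
    set δ := min 1 (‖v‖ / (2 * (K * S + 1))) with hd
    have h0 : 0 < δ := by positivity
    have h1 : δ ≤ 1 := min_le_left _ _
    have h2 : δ * (2 * (K * S + 1)) ≤ ‖v‖ := by
      rw [← le_div_iff₀ (by positivity)]; exact min_le_right _ _
    have h3 : δ ^ 2 ≤ δ := by nlinarith
    have h4 : K * S * δ ^ 2 ≤ K * S * δ := by gcongr
    linarith
  set i : ℕ → Fin 2 := fun k => if k % 2 = 0 then 0 else 1 with hi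
  set τ : ℕ → ℝ := fun k => (if k % 2 = 0 then l else m) * (δ * (1 / (((k / 2 : ℕ) : ℝ) + 1))) with hτ
  have hτ0 : ∀ k : ℕ, min l m * δ * (1 / ((k : ℝ) + 1)) ≤ τ k := by
    intro k
    simp only [hτ]
    rw [mul_assoc]
    have h1 : ((k / 2 : ℕ) : ℝ) ≤ k := by exact_mod_cast Nat.div_le_self k 2
    have h2 : min l m ≤ (if k % 2 = 0 then l else m) := by
      split_ifs
      · exact min_le_left _ _
      · exact min_le_right _ _
    have h3 : 0 ≤ (if k % 2 = 0 then l else m) := by split_ifs <;> positivity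
    gcongr
  have hminp : 0 < min l m := lt_min hlp hmp
  have hτp : ∀ k, 0 < τ k := fun k => lt_of_lt_of_le (by positivity) (hτ0 k)
  set T : ℕ → ℝ := fun n => ∑ k ∈ Finset.range n, τ k with hTdef
  have hTs : ∀ n, T (n + 1) - T n = τ n := by
    intro n; simp [hTdef, Finset.sum_range_succ]
  have hTm : StrictMono T := strictMono_nat_of_lt_succ fun n => by linarith [hTs n, hτp n]
  have hTt : Filter.Tendsto T Filter.atTop Filter.atTop := by
    have h1 := (Real.tendsto_sum_range_one_div_nat_succ_atTop).const_mul_atTop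
      (show 0 < min l m * δ by positivity)
    refine Filter.tendsto_atTop_mono (fun n => ?_) h1
    rw [Finset.mul_sum]
    exact Finset.sum_le_sum fun k _ => hτ0 k
  obtain ⟨u, Φ, hu, hΦ, hint, hval⟩ := glue L i T (by simp [hTdef]) hTm hTt v
  refine ⟨u, Φ, v, hu, hΦ, hint, fun hlim => ?_⟩
  simp only [hTs] at hval
  set x := xs (fun n => L (i n)) τ v with hx
  have hrec : ∀ n : ℕ, x (2 * (n + 1)) = NormedSpace.exp ((m * (δ * (1 / ((n:ℝ) + 1)))) • L 1)
      (NormedSpace.exp ((l * (δ * (1 / ((n:ℝ) + 1)))) • L 0) (x (2 * n))) := by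
    intro n
    have e1 : (2 * n + 1) % 2 = 1 := by omega
    have e2 : (2 * n + 1) / 2 = n := by omega
    have e3 : (2 * n) % 2 = 0 := by omega
    have e4 : (2 * n) / 2 = n := by omega
    have s1 : x (2 * n + 1 + 1) = NormedSpace.exp (τ (2 * n + 1) • L (i (2 * n + 1)))
      (NormedSpace.exp (τ (2 * n) • L (i (2 * n))) (x (2 * n))) := rfl
    have t1 : τ (2 * n + 1) = m * (δ * (1 / ((n:ℝ) + 1))) := by simp only [hτ, e1, e2]; simp
    have t2 : τ (2 * n) = l * (δ * (1 / ((n:ℝ) + 1))) := by simp only [hτ, e3, e4]; simp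
    have t3 : i (2 * n + 1) = 1 := by simp only [hi, e1]; simp
    have t4 : i (2 * n) = 0 := by simp only [hi, e3]; simp
    rw [t1, t2, t3, t4] at s1
    exact s1
  have hbound : ∀ n, ‖x (2 * n) - v‖ ≤ ∑ k ∈ Finset.range n, K * δ ^ 2 * (1 / ((k:ℝ) + 1)) ^ 2 := by
    intro n
    induction n with
    | zero => simp [hx, xs]
    | succ n ih =>
      rw [Finset.sum_range_succ, hrec]
      set h := δ * (1 / ((n:ℝ) + 1)) with hh
      have hh0 : 0 ≤ h := by positivity
      have s1 := hstep h hh0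
      have s2 := ex_contr (L 1) (hdis 1) (NormedSpace.exp ((l * h) • L 0) (x (2 * n) - v))
        (m * h) (by positivity)
      have s3 := ex_contr (L 0) (hdis 0) (x (2 * n) - v) (l * h) (by positivity)
      rw [map_sub, map_sub] at s2
      rw [map_sub] at s3
      have s4 : K * h ^ 2 = K * δ ^ 2 * (1 / ((n:ℝ) + 1)) ^ 2 := by rw [hh]; ring
      rw [← s4]
      refine (norm_sub_le_norm_sub_add_norm_sub _ _ _).trans (add_le_add (s2.trans (s3.trans ih)) s1)
  have hfar : ∀ n, ‖v‖ / 2 ≤ ‖Φ (T (2 * n))‖ := by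
    intro n
    rw [hval]
    have h1 : ‖x (2 * n) - v‖ ≤ ‖v‖ / 2 := by
      refine (hbound n).trans (le_trans ?_ hδ2)
      rw [← Finset.mul_sum]
      gcongr
      exact hsum.sum_le_tsum _ (fun k _ => by positivity)
    have h2 := norm_sub_norm_le v (x (2 * n))
    rw [norm_sub_rev] at h2
    linarith
  have h2n : Filter.Tendsto (fun n : ℕ => 2 * n) Filter.atTop Filter.atTop :=
    Filter.tendsto_id.const_mul_atTop' two_pos
  have hl2 := (hlim.comp (hTt.comp h2n)).norm
  rw [norm_zero] at hl2
  have := ge_of_tendsto' hl2 hfar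
  linarith

lemma LL_const (a b d₀ d₁ : ℝ) (i : Fin 2) (v : E3) (hv : v ≠ 0) (h : LL a b d₀ d₁ i v = 0) :
    ∃ (u : ℝ → Fin 2) (Φ : ℝ → E3) (v : E3), Measurable u ∧ Continuous Φ ∧
      (∀ t : ℝ, 0 ≤ t → Φ t = v + ∫ s in (0:ℝ)..t, LL a b d₀ d₁ (u s) (Φ s)) ∧
      ¬ Filter.Tendsto Φ Filter.atTop (nhds 0) := by
  refine ⟨fun _ => i, fun _ => v, v, measurable_const, continuous_const, ?_, ?_⟩
  · intro t _
    simp [h]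
  · intro hc
    exact hv (tendsto_nhds_unique tendsto_const_nhds hc)

/-- For `a, b ∈ ℝ` and `d₀, d₁ > 0`, the switched system defined by
`B₀ = [[0, a, -1],[-a, 0, 0],[1, 0, -d₀]]` and `B₁ = [[0, b, 0],[-b, 0, -1],[0, 1, -d₁]]`
is GUAS if and only if `ab > 0`. -/
theorem isGUAS_dimK_two_example_iff (a b d₀ d₁ : ℝ) (hd₀ : 0 < d₀) (hd₁ : 0 < d₁) :
    IsGUAS !![0, a, -1; -a, 0, 0; 1, 0, -d₀] !![0, b, 0; -b, 0, -1; 0, 1, -d₁] ↔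
      0 < a * b := by
  constructor
  · intro hG
    by_contra hn
    have hex : ∃ (u : ℝ → Fin 2) (Φ : ℝ → E3) (v : E3), Measurable u ∧ Continuous Φ ∧
        (∀ t : ℝ, 0 ≤ t → Φ t = v + ∫ s in (0:ℝ)..t, LL a b d₀ d₁ (u s) (Φ s)) ∧
        ¬ Filter.Tendsto Φ Filter.atTop (nhds 0) := by
      rcases (not_lt.mp hn).lt_or_eq with h | h
      · exact not_guas_of_neg a b d₀ d₁ hd₀ hd₁ h
      · rcases mul_eq_zero.mp h with h | h
        · refine LL_const a b d₀ d₁ 0 (EuclideanSpace.single 1 1) (by simp) ?_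
          ext i
          fin_cases i
          · exact (LL00 _ _ _ _ _).trans (by simp [h])
          · exact (LL01 _ _ _ _ _).trans (by simp)
          · exact (LL02 _ _ _ _ _).trans (by simp)
        · refine LL_const a b d₀ d₁ 1 (EuclideanSpace.single 0 1) (by simp) ?_
          ext i
          fin_cases i
          · exact (LL10 _ _ _ _ _).trans (by simp)
          · exact (LL11 _ _ _ _ _).trans (by simp [h])
          · exact (LL12 _ _ _ _ _).trans (by simp)
    obtain ⟨u, Φ, v, hu, hΦ, hint, hno⟩ := hex
    exact hno (hG u hu v Φ hΦ hint)
  · intro hab u hu X Φ hΦ hint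
    exact guas_of_pos a b d₀ d₁ hd₀ hd₁ hab u hu Φ hΦ X hint

end
end
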